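/- arXiv:2401.10086 — 3 statements merged into one kernel-verified Lean document; each statement's English description precedes it below -/
import Mathlib

section
/- Let n ≥ m > r ≥ 0 be integers. For every ε > 0 there exists a constant C = C(m, n, r, ε) such that for all real H ≥ 2 the number of m×n matrices with all entries in F(H) and of rank exactly r is at most C·H^{2mr+nr+n−r²−r+ε} if 2m ≥ n + r, and at most C·H^{2nr+2m−2r+ε} if 2m < n + r. -/
/-- The set of rationals `a/b` in lowest terms with `|a| ≤ H` and `1 ≤ b ≤ H`. -/
def Farey (H : ℝ) : Set ℚ := {x : ℚ | |(x.num : ℝ)| ≤ H ∧ (x.den : ℝ) ≤ H}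

open Finset in
lemma divsum (X j : ℕ) :
    ∑ L ∈ Icc 1 X, ((L.divisors.card : ℝ) ^ j / L) ≤ (1 + Real.log X) ^ (2 ^ j) := by
  induction j with
  | zero =>
    have h := harmonic_le_one_add_log X
    rw [harmonic_eq_sum_Icc] at h
    push_cast at h
    simpa using h
  | succ j ih =>
    have hnn : ∀ L : ℕ, (0:ℝ) ≤ (L.divisors.card : ℝ) ^ j / L := fun L => by positivity
    calc ∑ L ∈ Icc 1 X, ((L.divisors.card : ℝ) ^ (j+1) / L)
        ≤ ∑ L ∈ Icc 1 X, ∑ q ∈ (Icc 1 X ×ˢ Icc 1 X) with q.1 * q.2 = L,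
            ((q.1.divisors.card : ℝ) ^ j / q.1) * ((q.2.divisors.card : ℝ) ^ j / q.2) := by
          refine sum_le_sum fun L hL => ?_
          have hL' := mem_Icc.1 hL
          have hset : ((Icc 1 X ×ˢ Icc 1 X).filter fun q : ℕ × ℕ => q.1 * q.2 = L)
              = L.divisorsAntidiagonal := by
            ext ⟨a, b⟩
            simp only [mem_filter, mem_product, mem_Icc, Nat.mem_divisorsAntidiagonal]
            constructor
            · rintro ⟨_, h⟩; exact ⟨h, by omega⟩
            · rintro ⟨h, h0⟩
              have ha : a ≠ 0 := by rintro rfl; simp at h; omega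
              have hb : b ≠ 0 := by rintro rfl; simp at h; omega
              have h1 : a ≤ L := Nat.le_of_dvd (by omega) ⟨b, h.symm⟩
              have h2 : b ≤ L := Nat.le_of_dvd (by omega) ⟨a, by rw [mul_comm]; exact h.symm⟩
              exact ⟨⟨⟨by omega, by omega⟩, by omega, by omega⟩, h⟩
          rw [hset]
          have : (L.divisors.card : ℝ) ^ (j+1) / L
              = ∑ q ∈ L.divisorsAntidiagonal, (L.divisors.card : ℝ) ^ j / L := by
            rw [sum_const, nsmul_eq_mul, ← Nat.map_div_right_divisors, card_map]
            ring
          rw [this]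
          refine sum_le_sum fun q hq => ?_
          obtain ⟨h, h0⟩ := Nat.mem_divisorsAntidiagonal.1 hq
          rw [div_mul_div_comm, ← mul_pow]
          have : (L:ℝ) = q.1 * q.2 := by rw [← h]; push_cast; rfl
          rw [← this]
          gcongr
          rw [← h, Nat.divisors_mul]
          exact_mod_cast card_mul_le
      _ ≤ ∑ q ∈ (Icc 1 X ×ˢ Icc 1 X),
            ((q.1.divisors.card : ℝ) ^ j / q.1) * ((q.2.divisors.card : ℝ) ^ j / q.2) := by
          apply sum_fiberwise_le_sum_of_sum_fiber_nonneg
          intro y _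
          exact sum_nonneg fun q _ => mul_nonneg (hnn _) (hnn _)
      _ = (∑ L ∈ Icc 1 X, ((L.divisors.card : ℝ) ^ j / L)) ^ 2 := by
          rw [sq, sum_mul_sum, sum_product]
      _ ≤ ((1 + Real.log X) ^ (2 ^ j)) ^ 2 := by
          gcongr
      _ = _ := by rw [← pow_mul, pow_succ]


lemma bezout_lcm {ι : Type*} [DecidableEq ι] (b : ι → ℕ) (hb : ∀ i, b i ≠ 0) (t : Finset ι) :
    ∃ (s : ι → ℤ) (z : ℤ), ∑ i ∈ t, (s i : ℚ) / b i + z = 1 / (t.lcm b : ℕ) := by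
  induction t using Finset.induction_on with
  | empty => exact ⟨fun _ => 0, 1, by simp⟩
  | insert i t hi ih =>
    obtain ⟨s, z, h⟩ := ih
    set M := t.lcm b with hM
    have hM0 : M ≠ 0 := by
      rw [hM, Ne, Finset.lcm_eq_zero_iff]
      simp [hb]
    have hg := Nat.gcd_eq_gcd_ab (b i) M
    have hgl := Nat.gcd_mul_lcm (b i) M
    set x := Nat.gcdA (b i) M
    set y := Nat.gcdB (b i) M
    refine ⟨fun l => if l = i then y else x * s l, x * z, ?_⟩
    rw [Finset.sum_insert hi, Finset.lcm_insert, ← hM]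
    have e1 : ∑ l ∈ t, (((if l = i then y else x * s l : ℤ)) : ℚ) / b l
        = x * ∑ l ∈ t, (s l : ℚ) / b l := by
      rw [Finset.mul_sum]
      refine Finset.sum_congr rfl fun l hl => ?_
      have : l ≠ i := by rintro rfl; exact hi hl
      simp [this, mul_div_assoc]
    rw [e1]
    have e2 : (x : ℚ) * ∑ l ∈ t, (s l : ℚ) / b l = x * (1 / M) - x * z := by
      rw [← h]; ring
    rw [e2]
    have hgq : (((b i).gcd M : ℕ) : ℚ) = b i * x + M * y := by exact_mod_cast hg
    have hglq : (((b i).gcd M : ℕ) : ℚ) * ((b i).lcm M : ℕ) = b i * M := by exact_mod_cast hgl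
    have hb0 : (b i : ℚ) ≠ 0 := by exact_mod_cast hb i
    have hMq : (M : ℚ) ≠ 0 := by exact_mod_cast hM0
    have hl0 : (((b i).lcm M : ℕ) : ℚ) ≠ 0 := by
      exact_mod_cast Nat.lcm_ne_zero (hb i) hM0
    have hlcm : GCDMonoid.lcm (b i) M = (b i).lcm M := rfl
    simp only [if_true, hlcm]
    push_cast
    field_simp
    rw [hgq] at hglq
    linear_combination hglq

open Finset in
lemma lattice_count {k : ℕ} (N : ℕ) (b : Fin k → ℕ) (hb : ∀ i, b i ≠ 0) (hbN : ∀ i, b i ≤ N) :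
    ((Fintype.piFinset fun _ : Fin k => Icc (-(N:ℤ)) N).filter
      fun a => ∑ i, (a i : ℚ) / b i = 0).card * (univ.lcm b) ≤ (3 * N) ^ k := by
  obtain ⟨s, z, h⟩ := bezout_lcm b hb univ
  set L := univ.lcm b with hL
  have hL0 : L ≠ 0 := by
    rw [hL, Ne, Finset.lcm_eq_zero_iff]
    simp [hb]
  have hLq : (L : ℚ) ≠ 0 := by exact_mod_cast hL0
  have hcard : (Fintype.piFinset fun _ : Fin k => Ico (-(N:ℤ)) (2 * N)).card = (3 * N) ^ k := by
    rw [Fintype.card_piFinset]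
    simp
    congr 1
    omega
  rw [← hcard, ← card_range L, ← card_product]
  have key : ∀ j : ℕ, ∃ w : ℤ, ∑ i, (((j * s i) % b i : ℤ) : ℚ) / b i = j / L + w := by
    intro j
    refine ⟨-(j * z) - ∑ i, ((j * s i) / b i), ?_⟩
    have e : ∀ i, (((j * s i) % b i : ℤ) : ℚ) / b i
        = j * ((s i : ℚ) / b i) - (((j * s i) / b i : ℤ) : ℚ) := by
      intro i
      have hb0 : (b i : ℚ) ≠ 0 := by exact_mod_cast hb i
      have := Int.emod_add_mul_ediv (j * s i) (b i)
      have hq : (((j * s i) % b i : ℤ) : ℚ) + b i * (((j * s i) / b i : ℤ) : ℚ) = j * s i := by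
        exact_mod_cast this
      rw [div_eq_iff hb0, sub_mul, mul_assoc, div_mul_cancel₀ _ hb0]
      linear_combination hq
    rw [sum_congr rfl fun i _ => e i, sum_sub_distrib, ← mul_sum]
    have e2 : ∑ i, (s i : ℚ) / b i = 1 / L - z := by rw [← h]; ring
    rw [e2]
    push_cast
    ring
  refine card_le_card_of_injOn (fun q i => q.1 i + (q.2 * s i) % b i) ?_ ?_
  · rintro ⟨a, j⟩ hq
    simp only [coe_product, Set.mem_prod, mem_coe, mem_filter, Fintype.mem_piFinset, mem_Icc] at hq
    simp only [mem_coe, Fintype.mem_piFinset, mem_Ico]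
    intro i
    have h1 := hq.1.1 i
    have hbi : (0:ℤ) < b i := by exact_mod_cast Nat.pos_of_ne_zero (hb i)
    have h2 := Int.emod_nonneg (j * s i) hbi.ne'
    have h3 := Int.emod_lt_of_pos (j * s i) hbi
    have h4 := hbN i
    constructor <;> omega
  · rintro ⟨a, j⟩ hq ⟨a', j'⟩ hq' heq
    simp only [coe_product, Set.mem_prod, mem_coe, mem_filter, mem_range] at hq hq'
    have hi : ∀ i, a i + (j * s i) % b i = a' i + (j' * s i) % b i := fun i => congrFun heq i
    obtain ⟨w, hw⟩ := key j
    obtain ⟨w', hw'⟩ := key j'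
    have hs : (j : ℚ) / L + w = j' / L + w' := by
      rw [← hw, ← hw', ← zero_add (∑ i, _), ← hq.1.2, ← sum_add_distrib]
      rw [← zero_add (∑ i, (((j' * s i) % b i : ℤ) : ℚ) / b i), ← hq'.1.2, ← sum_add_distrib]
      refine sum_congr rfl fun i _ => ?_
      rw [← add_div, ← add_div]
      congr 1
      exact_mod_cast hi i
    have hs2 : (j : ℤ) - j' = L * (w' - w) := by
      have : (j : ℚ) - j' = L * (w' - w) := by
        field_simp at hs
        linear_combination hs
      exact_mod_cast this
    have hjj : j = j' := by
      have hd : (L : ℤ) ∣ (j : ℤ) - j' := ⟨_, hs2⟩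
      have hlt : |(j : ℤ) - j'| < L := by
        rw [abs_lt]; constructor <;> omega
      have := Int.eq_zero_of_abs_lt_dvd hd hlt
      omega
    subst hjj
    have : a = a' := by
      funext i
      have := hi i
      omega
    rw [this]

/-- rationals of height at most `N` -/
noncomputable def FN (N : ℕ) : Finset ℚ :=
  ((Finset.Icc (-(N:ℤ)) N ×ˢ Finset.Icc 1 N).image fun q => (q.1 : ℚ) / (q.2 : ℚ)).filter
    fun x => |x.num| ≤ N ∧ x.den ≤ N

lemma mem_FN {N : ℕ} {x : ℚ} : x ∈ FN N ↔ |x.num| ≤ N ∧ x.den ≤ N := by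
  unfold FN
  rw [Finset.mem_filter, and_iff_right_iff_imp]
  rintro ⟨h1, h2⟩
  rw [Finset.mem_image]
  refine ⟨(x.num, x.den), ?_, Rat.num_div_den x⟩
  have := x.den_pos
  have := abs_le.1 h1
  simp only [Finset.mem_product, Finset.mem_Icc]
  refine ⟨⟨this.1, this.2⟩, by omega, h2⟩

lemma card_FN (N : ℕ) : (FN N).card ≤ 3 * N ^ 2 := by
  unfold FN
  refine (Finset.card_filter_le _ _).trans (Finset.card_image_le.trans ?_)
  rw [Finset.card_product]
  simp
  have : ((N:ℤ) + 1 + N).toNat = 2 * N + 1 := by omega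
  rw [this]
  rcases Nat.eq_zero_or_pos N with h | h
  · simp [h]
  · nlinarith

lemma neg_mem_FN {N : ℕ} {x : ℚ} (h : x ∈ FN N) : -x ∈ FN N := by
  rw [mem_FN] at *
  simpa using h

open Finset in
/-- the number of zero sums -/
noncomputable def EE (F : Finset ℚ) (k : ℕ) : ℕ :=
  ((Fintype.piFinset fun _ : Fin k => F).filter fun x => ∑ i, x i = 0).card

open Finset in
lemma EE_bound (N k : ℕ) (hN : 1 ≤ N) :
    (EE (FN N) k : ℝ) ≤ (3 * N) ^ k * (1 + Real.log ((N:ℝ) ^ k)) ^ (2 ^ k) := by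
  set B := Fintype.piFinset fun _ : Fin k => Icc 1 N with hB
  have hBm : ∀ b ∈ B, ∀ i, 1 ≤ b i ∧ b i ≤ N := by
    intro b hb i
    exact mem_Icc.1 (Fintype.mem_piFinset.1 hb i)
  have h1 : EE (FN N) k ≤ ∑ b ∈ B, ((Fintype.piFinset fun _ : Fin k => Icc (-(N:ℤ)) N).filter
      fun a => ∑ i, (a i : ℚ) / b i = 0).card := by
    rw [← card_sigma]
    refine card_le_card_of_injOn (fun x => ⟨fun i => (x i).den, fun i => (x i).num⟩) ?_ ?_
    · intro x hx
      simp only [mem_coe, mem_filter, Fintype.mem_piFinset, mem_FN] at hx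
      simp only [coe_sigma, Set.mem_sigma_iff, mem_coe, mem_filter, Fintype.mem_piFinset, hB,
        mem_Icc, Rat.num_div_den]
      refine ⟨fun i => ⟨(x i).den_pos, (hx.1 i).2⟩, fun i => ?_, hx.2⟩
      exact abs_le.1 (hx.1 i).1
    · intro x _ y _ h
      simp only [Sigma.mk.injEq] at h
      obtain ⟨h1, h2⟩ := h
      have h2 := eq_of_heq h2
      funext i
      exact Rat.ext (congrFun h2 i) (congrFun h1 i)
  have h2 : ∀ b ∈ B, (((Fintype.piFinset fun _ : Fin k => Icc (-(N:ℤ)) N).filter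
      fun a => ∑ i, (a i : ℚ) / b i = 0).card : ℝ) ≤ (3 * N) ^ k * (1 / (univ.lcm b : ℕ)) := by
    intro b hb
    have hb0 : ∀ i, b i ≠ 0 := fun i => by have := hBm b hb i; omega
    have hL0 : univ.lcm b ≠ 0 := by
      rw [Ne, Finset.lcm_eq_zero_iff]
      simp [hb0]
    rw [mul_one_div, le_div_iff₀ (by exact_mod_cast Nat.pos_of_ne_zero hL0)]
    exact_mod_cast lattice_count N b hb0 fun i => (hBm b hb i).2
  have h3 : ∑ b ∈ B, (1 / ((univ.lcm b : ℕ) : ℝ)) ≤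
      ∑ L ∈ Icc 1 (N ^ k), ((L.divisors.card : ℝ) ^ k / L) := by
    have hmap : ∀ b ∈ B, univ.lcm b ∈ Icc 1 (N ^ k) := by
      intro b hb
      have hb0 : ∀ i, b i ≠ 0 := fun i => by have := hBm b hb i; omega
      have hL0 : univ.lcm b ≠ 0 := by
        rw [Ne, Finset.lcm_eq_zero_iff]
        simp [hb0]
      rw [mem_Icc]
      refine ⟨Nat.pos_of_ne_zero hL0, ?_⟩
      have : univ.lcm b ∣ ∏ i, b i := Finset.lcm_dvd fun i _ => dvd_prod_of_mem b (mem_univ i)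
      refine (Nat.le_of_dvd (prod_pos fun i _ => Nat.pos_of_ne_zero (hb0 i)) this).trans ?_
      calc ∏ i, b i ≤ ∏ i : Fin k, N := prod_le_prod' fun i _ => (hBm b hb i).2
        _ = N ^ k := by simp
    rw [← sum_fiberwise_of_maps_to hmap]
    refine sum_le_sum fun L hL => ?_
    have hL' := mem_Icc.1 hL
    rw [sum_congr rfl (g := fun _ => 1 / (L:ℝ)) (by
      intro b hb
      rw [(mem_filter.1 hb).2]), sum_const, nsmul_eq_mul, mul_one_div]
    gcongr
    have : (B.filter fun b => univ.lcm b = L) ⊆ Fintype.piFinset fun _ : Fin k => L.divisors := by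
      intro b hb
      rw [Fintype.mem_piFinset]
      intro i
      rw [Nat.mem_divisors]
      refine ⟨?_, by omega⟩
      rw [← (mem_filter.1 hb).2]
      exact dvd_lcm (mem_univ i)
    have := card_le_card this
    rw [Fintype.card_piFinset] at this
    simp at this
    exact_mod_cast this
  calc (EE (FN N) k : ℝ) ≤ ∑ b ∈ B, (((Fintype.piFinset fun _ : Fin k => Icc (-(N:ℤ)) N).filter
      fun a => ∑ i, (a i : ℚ) / b i = 0).card : ℝ) := by exact_mod_cast h1
    _ ≤ ∑ b ∈ B, (3 * (N:ℝ)) ^ k * (1 / (univ.lcm b : ℕ)) := sum_le_sum h2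
    _ = (3 * (N:ℝ)) ^ k * ∑ b ∈ B, (1 / ((univ.lcm b : ℕ) : ℝ)) := by rw [mul_sum]
    _ ≤ _ := by
      gcongr
      refine h3.trans ((divsum (N ^ k) k).trans ?_)
      push_cast
      rfl

lemma EE_bound' (k : ℕ) (ε : ℝ) (hε : 0 < ε) :
    ∃ C : ℝ, 0 < C ∧ ∀ N : ℕ, 1 ≤ N → (EE (FN N) k : ℝ) ≤ C * ((N:ℝ) ^ (k + ε)) := by
  set M : ℕ := 2 ^ k with hM
  have hM0 : (0:ℝ) < M := by rw [hM]; positivity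
  set δ := ε / M with hδ
  have hδ0 : 0 < δ := by positivity
  refine ⟨3 ^ k * (1 + k / δ) ^ M, by positivity, fun N hN => ?_⟩
  have hN' : (1:ℝ) ≤ N := by exact_mod_cast hN
  have hN0 : (0:ℝ) < N := by linarith
  have h1 : 1 + Real.log ((N:ℝ) ^ k) ≤ (1 + k / δ) * (N:ℝ) ^ δ := by
    rw [Real.log_pow]
    have := Real.log_le_rpow_div hN0.le hδ0
    have h2 : (1:ℝ) ≤ (N:ℝ) ^ δ := Real.one_le_rpow hN' hδ0.le
    have h3 : (k:ℝ) * Real.log N ≤ k * ((N:ℝ) ^ δ / δ) := by gcongr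
    calc _ ≤ (N:ℝ) ^ δ + k * ((N:ℝ) ^ δ / δ) := by linarith
      _ = _ := by ring
  have h0 : 0 ≤ 1 + Real.log ((N:ℝ) ^ k) := by
    have := Real.log_nonneg (one_le_pow₀ hN' : 1 ≤ (N:ℝ) ^ k)
    linarith
  have h4 : ((N:ℝ) ^ δ) ^ M = (N:ℝ) ^ ε := by
    rw [← Real.rpow_mul_natCast hN0.le, hδ, div_mul_cancel₀ _ hM0.ne']
  calc (EE (FN N) k : ℝ) ≤ (3 * N) ^ k * (1 + Real.log ((N:ℝ) ^ k)) ^ M := EE_bound N k hN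
    _ ≤ (3 * N) ^ k * ((1 + k / δ) * (N:ℝ) ^ δ) ^ M := by gcongr
    _ = 3 ^ k * (1 + k / δ) ^ M * ((N:ℝ) ^ (k + ε)) := by
      rw [Real.rpow_add hN0, Real.rpow_natCast, mul_pow, mul_pow, h4]; ring

lemma amgm {k : ℕ} (hk : k ≠ 0) (z : Fin k → ℝ) (hz : ∀ i, 0 ≤ z i) :
    ∏ i, z i ≤ ∑ i, (1 / (k:ℝ)) * z i ^ k := by
  have hk' : (k:ℝ) ≠ 0 := by exact_mod_cast hk
  have h := Real.geom_mean_le_arith_mean_weighted Finset.univ (fun _ : Fin k => 1 / (k:ℝ))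
    (fun i => z i ^ k) (fun _ _ => by positivity) (by simp [hk']) (fun i _ => pow_nonneg (hz i) k)
  refine le_trans (le_of_eq ?_) h
  refine Finset.prod_congr rfl fun i _ => ?_
  rw [one_div, Real.pow_rpow_inv_natCast (hz i) hk]

lemma exists_int_mult {ι : Type*} (s : Finset ι) (c : ι → ℚ) :
    ∃ (D : ℕ) (y : ι → ℤ), D ≠ 0 ∧ ∀ i ∈ s, (y i : ℚ) = D * c i := by
  classical
  refine ⟨∏ i ∈ s, (c i).den, fun i => (∏ j ∈ s.erase i, ((c j).den : ℤ)) * (c i).num, ?_, ?_⟩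
  · exact Finset.prod_ne_zero_iff.2 fun i _ => (c i).den_nz
  · intro i hi
    rw [← Finset.mul_prod_erase s _ hi]
    push_cast
    have := Rat.den_mul_eq_num (c i)
    rw [← this]
    ring

lemma addChar_sum {A ι : Type*} [AddCommMonoid A] (ψ : AddChar A ℂ) (s : Finset ι) (g : ι → A) :
    ψ (∑ i ∈ s, g i) = ∏ i ∈ s, ψ (g i) := by
  classical
  induction s using Finset.induction_on with
  | empty => simp
  | insert a s ha ih => rw [Finset.sum_insert ha, Finset.prod_insert ha, AddChar.map_add_eq_mul, ih]

open Finset in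
lemma fourier_exp {p : ℕ} [Fact p.Prime] (ψ : AddChar (ZMod p) ℂ) (hψ : ψ.IsPrimitive)
    (F : Finset ℚ) {k : ℕ} (c : Fin k → ZMod p) (y : ℚ → ZMod p) :
    ∑ t : ZMod p, ∏ i, (∑ x ∈ F, ψ (t * (c i * y x))) =
      p * ((Fintype.piFinset fun _ : Fin k => F).filter fun x => ∑ i, c i * y (x i) = 0).card := by
  have h1 : ∀ t : ZMod p, ∏ i, (∑ x ∈ F, ψ (t * (c i * y x))) =
      ∑ x ∈ Fintype.piFinset fun _ : Fin k => F, ψ (t * ∑ i, c i * y (x i)) := by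
    intro t
    rw [prod_univ_sum]
    refine sum_congr rfl fun x _ => ?_
    rw [mul_sum]
    exact (addChar_sum ψ univ _).symm
  rw [sum_congr rfl fun t _ => h1 t, sum_comm]
  rw [sum_congr rfl fun x _ => AddChar.sum_mulShift (∑ i, c i * y (x i)) hψ]
  rw [card_filter]
  push_cast
  rw [mul_sum]
  refine sum_congr rfl fun x _ => ?_
  simp [ZMod.card]

open Finset in
lemma fourier_main (F : Finset ℚ) (hF : ∀ x ∈ F, -x ∈ F) (k K : ℕ) (c : Fin k → ℚ)
    (hc : ∀ i, c i ≠ 0) :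
    ∃ M : ℕ → ℝ,
      (((Fintype.piFinset fun _ : Fin k => F).filter fun x => ∑ i, c i * x i = 0).card : ℝ) ≤ M k ∧
      (∀ l, 2 * l ≤ K → M (2 * l) ≤ EE F (2 * l)) ∧
      ∀ (j : ℕ) (T : ℝ), 0 < T → M (j + 1) ≤ (T⁻¹ * M (j + 2) + T * M j) / 2 := by
  obtain ⟨D, y, hD, hy⟩ := exists_int_mult F id
  obtain ⟨D', c', hD', hc'⟩ := exists_int_mult univ c
  have hDq : (D:ℚ) ≠ 0 := by exact_mod_cast hD
  have hDq' : (D':ℚ) ≠ 0 := by exact_mod_cast hD'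
  set Y : ℤ := ∑ x ∈ F, |y x| with hY
  have hYx : ∀ x ∈ F, |y x| ≤ Y := fun x hx =>
    single_le_sum (f := fun x => |y x|) (fun _ _ => abs_nonneg _) hx
  have hY0 : 0 ≤ Y := sum_nonneg fun _ _ => abs_nonneg _
  set Z : ℤ := ∑ i, |c' i| with hZ
  have hZx : ∀ i, |c' i| ≤ Z := fun i =>
    single_le_sum (f := fun i => |c' i|) (fun _ _ => abs_nonneg _) (mem_univ i)
  have hZ0 : 0 ≤ Z := sum_nonneg fun _ _ => abs_nonneg _
  obtain ⟨p, hpB, hp⟩ := Nat.exists_infinite_primes (K * Y + Z + 1).toNat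
  have : Fact p.Prime := ⟨hp⟩
  have hKY : 0 ≤ K * Y := by positivity
  have hpB' : K * Y + Z < p := by omega
  have hp0 : (0:ℝ) < p := by exact_mod_cast hp.pos
  set ψ := ZMod.stdAddChar (N := p)
  have hψ : ψ.IsPrimitive := ZMod.isPrimitive_stdAddChar p
  set f : ZMod p → ℂ := fun t => ∑ x ∈ F, ψ (t * ((y x : ℤ) : ZMod p)) with hf
  have hyneg : ∀ x ∈ F, y (-x) = - y x := by
    intro x hx
    have h1 := hy x hx
    have h2 := hy (-x) (hF x hx)
    have : ((y (-x) : ℤ) : ℚ) = ((- y x : ℤ) : ℚ) := by push_cast; rw [h1, h2]; simp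
    exact_mod_cast this
  have hfconj : ∀ t, (starRingEnd ℂ) (f t) = f t := by
    intro t
    simp only [hf, map_sum]
    refine sum_bij' (fun x _ => -x) (fun x _ => -x) (fun x hx => hF x hx) (fun x hx => hF x hx)
      (by simp) (by simp) ?_
    intro x hx
    rw [hyneg x hx]
    push_cast
    rw [mul_neg, AddChar.map_neg_eq_conj]
  have hnorm : ∀ t l, ((‖f t‖ ^ (2 * l) : ℝ) : ℂ) = f t ^ (2 * l) := by
    intro t l
    rw [pow_mul, pow_mul, sq (f t)]
    nth_rewrite 2 [← hfconj t]
    rw [mul_comm, Complex.mul_conj, Complex.normSq_eq_norm_sq]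
    push_cast
    rfl
  refine ⟨fun j => (∑ t, ‖f t‖ ^ j) / p, ?_, ?_, ?_⟩
  · have hu : ∀ i, ((c' i : ℤ) : ZMod p) ≠ 0 := by
      intro i h
      rw [ZMod.intCast_zmod_eq_zero_iff_dvd] at h
      have h1 : c' i = 0 := Int.eq_zero_of_abs_lt_dvd h (by have := hZx i; omega)
      have h2 := hc' i (mem_univ i)
      rw [h1] at h2
      have : (D' : ℚ) * c i ≠ 0 := mul_ne_zero hDq' (hc i)
      exact this (by rw [← h2]; simp)
    have hle : ((Fintype.piFinset fun _ : Fin k => F).filter fun x => ∑ i, c i * x i = 0).card ≤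
        ((Fintype.piFinset fun _ : Fin k => F).filter fun x =>
          ∑ i, ((c' i : ℤ) : ZMod p) * ((y (x i) : ℤ) : ZMod p) = 0).card := by
      refine card_le_card fun x hx => ?_
      rw [mem_filter] at hx ⊢
      refine ⟨hx.1, ?_⟩
      have hx1 := Fintype.mem_piFinset.1 hx.1
      have : ((∑ i, c' i * y (x i) : ℤ) : ℚ) = 0 := by
        push_cast
        have : ∀ i, (c' i : ℚ) * y (x i) = D' * D * (c i * x i) := by
          intro i
          rw [hc' i (mem_univ i), hy _ (hx1 i)]
          simp only [id]
          ring
        rw [sum_congr rfl fun i _ => this i, ← mul_sum, hx.2, mul_zero]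
      have h0 : (∑ i, c' i * y (x i) : ℤ) = 0 := by exact_mod_cast this
      have := congrArg (Int.cast : ℤ → ZMod p) h0
      push_cast at this
      exact this
    refine le_trans (Nat.cast_le.2 hle) ?_
    rw [le_div_iff₀ hp0]
    have hexp := fourier_exp ψ hψ F (fun i => ((c' i : ℤ) : ZMod p)) (fun x => ((y x : ℤ) : ZMod p))
    have hexp' := congrArg norm hexp
    rw [norm_mul, Complex.norm_natCast, Complex.norm_natCast] at hexp'
    rw [mul_comm, ← hexp']
    have hff : ∀ (t : ZMod p) i, ∑ x ∈ F, ψ (t * (((c' i : ℤ) : ZMod p) * ((y x : ℤ) : ZMod p)))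
        = f (t * ((c' i : ℤ) : ZMod p)) := by
      intro t i
      simp only [hf, mul_assoc]
    refine (norm_sum_le _ _).trans ?_
    simp only [hff, norm_prod]
    rcases Nat.eq_zero_or_pos k with hk | hk
    · subst hk; simp
    calc ∑ t : ZMod p, ∏ i, ‖f (t * ((c' i : ℤ) : ZMod p))‖
        ≤ ∑ t : ZMod p, ∑ i, (1 / (k:ℝ)) * ‖f (t * ((c' i : ℤ) : ZMod p))‖ ^ k :=
          sum_le_sum fun t _ => amgm hk.ne' _ fun i => norm_nonneg _
      _ = ∑ i : Fin k, (1 / (k:ℝ)) * ∑ t : ZMod p, ‖f t‖ ^ k := by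
          rw [sum_comm]
          refine sum_congr rfl fun i _ => ?_
          rw [← mul_sum]
          congr 1
          exact Equiv.sum_comp (Equiv.mulRight₀ _ (hu i)) fun t => ‖f t‖ ^ k
      _ = ∑ t : ZMod p, ‖f t‖ ^ k := by
          have : (k:ℝ) ≠ 0 := by exact_mod_cast hk.ne'
          rw [sum_const, card_univ, Fintype.card_fin, nsmul_eq_mul]
          field_simp
  · intro l hl
    have hexp := fourier_exp ψ hψ F (fun _ : Fin (2 * l) => 1) (fun x => ((y x : ℤ) : ZMod p))
    simp only [one_mul, prod_const, card_univ, Fintype.card_fin] at hexp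
    have h2 : ((∑ t, ‖f t‖ ^ (2 * l) : ℝ) : ℂ) = ∑ t, f t ^ (2 * l) := by
      push_cast
      refine sum_congr rfl fun t _ => ?_
      rw [← hnorm]; push_cast; rfl
    have h3 : ∑ t, ‖f t‖ ^ (2 * l) = p * (((Fintype.piFinset fun _ : Fin (2 * l) => F).filter
        fun x => ∑ i, ((y (x i) : ℤ) : ZMod p) = 0).card : ℝ) := by
      have := h2.trans hexp
      exact_mod_cast this
    show (∑ t, ‖f t‖ ^ (2 * l)) / (p:ℝ) ≤ _
    rw [h3, mul_div_cancel_left₀ _ hp0.ne']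
    have : ((Fintype.piFinset fun _ : Fin (2 * l) => F).filter
        fun x => ∑ i, ((y (x i) : ℤ) : ZMod p) = 0).card ≤ EE F (2 * l) := by
      refine card_le_card fun x hx => ?_
      rw [mem_filter] at hx ⊢
      refine ⟨hx.1, ?_⟩
      have hx1 := Fintype.mem_piFinset.1 hx.1
      have h0 : ((∑ i, y (x i) : ℤ) : ZMod p) = 0 := by push_cast; exact hx.2
      rw [ZMod.intCast_zmod_eq_zero_iff_dvd] at h0
      have habs : |∑ i, y (x i)| ≤ K * Y := by
        calc |∑ i, y (x i)| ≤ ∑ i, |y (x i)| := abs_sum_le_sum_abs _ _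
          _ ≤ ∑ i : Fin (2 * l), Y := sum_le_sum fun i _ => hYx _ (hx1 i)
          _ = ((2 * l : ℕ) : ℤ) * Y := by simp
          _ ≤ K * Y := by
            have : ((2 * l : ℕ) : ℤ) ≤ K := by exact_mod_cast hl
            gcongr
      have h4 : ∑ i, y (x i) = 0 := Int.eq_zero_of_abs_lt_dvd h0 (by omega)
      have h5 : (D:ℚ) * ∑ i, x i = 0 := by
        rw [mul_sum]
        rw [sum_congr rfl fun i _ => (show (D:ℚ) * x i = y (x i) from (hy _ (hx1 i)).symm)]
        exact_mod_cast h4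
      exact (mul_eq_zero.1 h5).resolve_left hDq
    exact_mod_cast this
  · intro j T hT
    show (∑ t, ‖f t‖ ^ (j + 1)) / (p:ℝ) ≤
      (T⁻¹ * ((∑ t, ‖f t‖ ^ (j + 2)) / (p:ℝ)) + T * ((∑ t, ‖f t‖ ^ j) / (p:ℝ))) / 2
    have : (T⁻¹ * ((∑ t, ‖f t‖ ^ (j + 2)) / (p:ℝ)) + T * ((∑ t, ‖f t‖ ^ j) / (p:ℝ))) / 2
        = (∑ t, (T⁻¹ * ‖f t‖ ^ (j + 2) + T * ‖f t‖ ^ j) / 2) / p := by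
      rw [← sum_div, sum_add_distrib, ← mul_sum, ← mul_sum]
      ring
    rw [this]
    gcongr with t
    set u := ‖f t‖
    have hu : 0 ≤ u ^ j := pow_nonneg (norm_nonneg _) _
    have : 0 ≤ T⁻¹ * u ^ j * (u - T) ^ 2 := by positivity
    have h2 : T⁻¹ * u ^ j * (u - T) ^ 2 = T⁻¹ * u ^ (j+2) + T * u ^ j - 2 * u ^ (j+1) := by
      field_simp
      ring
    linarith

open Finset in
/-- The key lemma. -/
lemma key_count (k : ℕ) (ε : ℝ) (hε : 0 < ε) :
    ∃ C : ℝ, 0 < C ∧ ∀ N : ℕ, 1 ≤ N → ∀ c : Fin k → ℚ, (∀ i, c i ≠ 0) →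
      (((Fintype.piFinset fun _ : Fin k => FN N).filter fun x => ∑ i, c i * x i = 0).card : ℝ)
        ≤ C * (N:ℝ) ^ (k + ε) := by
  rcases Nat.even_or_odd' k with ⟨l, rfl | rfl⟩
  · obtain ⟨C, hC, h⟩ := EE_bound' (2 * l) ε hε
    refine ⟨C, hC, fun N hN c hc => ?_⟩
    obtain ⟨M, h1, h2, -⟩ := fourier_main (FN N) (fun x => neg_mem_FN) (2 * l) (2 * l) c hc
    exact h1.trans ((h2 l le_rfl).trans (h N hN))
  · obtain ⟨C, hC, h⟩ := EE_bound' (2 * l) ε hε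
    obtain ⟨C', hC', h'⟩ := EE_bound' (2 * (l + 1)) ε hε
    refine ⟨C + C', by positivity, fun N hN c hc => ?_⟩
    have hN0 : (0:ℝ) < N := by exact_mod_cast hN
    obtain ⟨M, h1, h2, h3⟩ :=
      fourier_main (FN N) (fun x => neg_mem_FN) (2 * l + 1) (2 * (l + 1)) c hc
    refine h1.trans ((h3 (2 * l) N hN0).trans ?_)
    have e1 := (h2 l (by omega)).trans (h N hN)
    have e2 := (h2 (l + 1) (by omega)).trans (h' N hN)
    have e3 : (N:ℝ)⁻¹ * M (2 * l + 2) ≤ C' * (N:ℝ) ^ (((2 * l + 1 : ℕ):ℝ) + ε) := by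
      calc (N:ℝ)⁻¹ * M (2 * l + 2) ≤ (N:ℝ)⁻¹ * (C' * (N:ℝ) ^ (((2 * (l + 1) : ℕ):ℝ) + ε)) := by
            gcongr; exact e2
        _ = _ := by
            have : (((2 * (l + 1) : ℕ):ℝ) + ε) = 1 + (((2 * l + 1 : ℕ):ℝ) + ε) := by
              push_cast; ring
            rw [this, Real.rpow_add hN0, Real.rpow_one]
            field_simp
    have e4 : (N:ℝ) * M (2 * l) ≤ C * (N:ℝ) ^ (((2 * l + 1 : ℕ):ℝ) + ε) := by
      calc (N:ℝ) * M (2 * l) ≤ (N:ℝ) * (C * (N:ℝ) ^ (((2 * l : ℕ):ℝ) + ε)) := by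
            gcongr
        _ = _ := by
            have : (((2 * l + 1 : ℕ):ℝ) + ε) = 1 + (((2 * l : ℕ):ℝ) + ε) := by
              push_cast; ring
            rw [this, Real.rpow_add hN0 1, Real.rpow_one]
            ring
    have e5 : 0 ≤ (C + C') * (N:ℝ) ^ (((2 * l + 1 : ℕ):ℝ) + ε) := by positivity
    linarith

lemma sel_rows {α β : Type*} [Fintype α] [Fintype β] (A : Matrix α β ℚ) (r : ℕ) (h : A.rank = r) :
    ∃ e : Fin r → α, LinearIndependent ℚ (A.submatrix e id).row ∧
      Submodule.span ℚ (Set.range (A.submatrix e id).row) =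
        Submodule.span ℚ (Set.range A.row) := by
  rw [Matrix.rank_eq_finrank_span_row] at h
  subst h
  obtain ⟨f, hf, hs, hi⟩ := Submodule.exists_fun_fin_finrank_span_eq ℚ (Set.range A.row)
  choose e he using hf
  have : (A.submatrix e id).row = f := by
    funext i
    rw [← he i]
    rfl
  exact ⟨e, by rw [this]; exact hi, by rw [this]; exact hs⟩

open Matrix in
lemma sel_cols {t r : ℕ} (B : Matrix (Fin t) (Fin r) ℚ) (h : LinearIndependent ℚ B.row) :
    ∃ g : Fin t → Fin r, IsUnit (B.submatrix id g) := by
  have hr : Bᵀ.rank = t := by rw [Matrix.rank_transpose, h.rank_matrix, Fintype.card_fin]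
  obtain ⟨g, hg, -⟩ := sel_rows Bᵀ t hr
  refine ⟨g, ?_⟩
  rw [Matrix.linearIndependent_rows_iff_isUnit] at hg
  have := (Matrix.isUnit_transpose (A := Bᵀ.submatrix g id)).2 hg
  exact this

/-- `e`, `g` select a nonsingular minor of maximal size. -/
def Good {m n r : ℕ} (e : Fin r → Fin m) (g : Fin r → Fin n) (A : Matrix (Fin m) (Fin n) ℚ) :
    Prop :=
  IsUnit (A.submatrix e g) ∧ ∀ i, ∃ c : Fin r → ℚ, ∀ j, A i j = ∑ l, c l * A (e l) j

lemma inj_of_isUnit_row {m n r : ℕ} (e : Fin r → Fin m) (g : Fin r → Fin n)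
    (A : Matrix (Fin m) (Fin n) ℚ) (h : IsUnit (A.submatrix e g)) : Function.Injective e := by
  have := (Matrix.linearIndependent_rows_iff_isUnit.2 h).injective
  intro a b hab
  apply this
  funext j
  simp [Matrix.row, hab]

lemma inj_of_isUnit_col {m n r : ℕ} (e : Fin r → Fin m) (g : Fin r → Fin n)
    (A : Matrix (Fin m) (Fin n) ℚ) (h : IsUnit (A.submatrix e g)) : Function.Injective g := by
  have := (Matrix.linearIndependent_cols_iff_isUnit.2 h).injective
  intro a b hab
  apply this
  funext j
  simp [Matrix.col, hab]

lemma exists_good {m n r : ℕ} (A : Matrix (Fin m) (Fin n) ℚ) (h : A.rank = r) :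
    ∃ (e : Fin r → Fin m) (g : Fin r → Fin n), Good e g A := by
  obtain ⟨e, hi, hs⟩ := sel_rows A r h
  obtain ⟨g, hg⟩ := sel_cols _ hi
  refine ⟨e, g, hg, fun i => ?_⟩
  have hm : A.row i ∈ Submodule.span ℚ (Set.range (A.submatrix e id).row) := by
    rw [hs]; exact Submodule.subset_span ⟨i, rfl⟩
  obtain ⟨c, hc⟩ := (Submodule.mem_span_range_iff_exists_fun ℚ).1 hm
  refine ⟨c, fun j => ?_⟩
  have := congrFun hc j
  rw [Finset.sum_apply] at this
  exact this.symm

open Finset in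
lemma count_subspace {r : ℕ} (F : Finset ℚ) (P : Matrix (Fin r) (Fin r) ℚ) (hP : IsUnit P)
    (T : Finset (Fin r)) :
    ((Fintype.piFinset fun _ : Fin r => F).filter
      fun v => ∀ l, l ∉ T → Matrix.vecMul v P⁻¹ l = 0).card ≤ F.card ^ T.card := by
  set o := T.orderEmbOfFin rfl with ho
  have hLI : LinearIndependent ℚ (P.submatrix o id).row :=
    (Matrix.linearIndependent_rows_iff_isUnit.2 hP).comp o o.injective
  obtain ⟨g, hg⟩ := sel_cols _ hLI
  have hdet : IsUnit P.det := (Matrix.isUnit_iff_isUnit_det _).1 hP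
  have hrec : ∀ v : Fin r → ℚ, Matrix.vecMul (Matrix.vecMul v P⁻¹) P = v := by
    intro v
    rw [Matrix.vecMul_vecMul, Matrix.nonsing_inv_mul _ hdet, Matrix.vecMul_one]
  have hform : ∀ v : Fin r → ℚ, (∀ l, l ∉ T → Matrix.vecMul v P⁻¹ l = 0) →
      (fun t => v (g t)) =
        Matrix.vecMul (fun t => Matrix.vecMul v P⁻¹ (o t)) ((P.submatrix o id).submatrix id g) := by
    intro v hv
    funext t
    conv_lhs => rw [← hrec v]
    simp only [Matrix.vecMul, dotProduct, Matrix.submatrix_apply, id] at hv ⊢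
    set w : Fin r → ℚ := fun l => ∑ i, v i * P⁻¹ i l
    rw [← sum_subset (subset_univ T) (f := fun x => w x * P x (g t))
      (fun l _ hl => by simp only [w, hv l hl, zero_mul])]
    have himg : T = univ.map o.toEmbedding := by
      rw [ho, map_orderEmbOfFin_univ]
    conv_lhs => rw [himg]
    rw [sum_map]
    rfl
  have hc : F.card ^ T.card = (Fintype.piFinset fun _ : Fin T.card => F).card := by simp
  rw [hc]
  refine card_le_card_of_injOn (fun v t => v (g t)) ?_ ?_
  · intro v hv
    simp only [mem_coe, mem_filter, Fintype.mem_piFinset] at hv ⊢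
    exact fun t => hv.1 _
  · intro v hv w hw hvw
    simp only [mem_coe, mem_filter] at hv hw
    have hvw : (fun t => v (g t)) = fun t => w (g t) := hvw
    rw [hform v hv.2, hform w hw.2] at hvw
    have h1 := Matrix.vecMul_injective_iff_isUnit.2 hg hvw
    have h2 : Matrix.vecMul v P⁻¹ = Matrix.vecMul w P⁻¹ := by
      funext l
      by_cases hl : l ∈ T
      · have : l ∈ Set.range o := by rw [ho, range_orderEmbOfFin]; exact hl
        obtain ⟨t, rfl⟩ := this
        exact congrFun h1 t
      · rw [hv.2 l hl, hw.2 l hl]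
    rw [← hrec v, ← hrec w, h2]

/-- size of the support of a vector -/
noncomputable def ssz {r : ℕ} (v : Fin r → ℚ) : ℕ := (Finset.univ.filter fun l => v l ≠ 0).card

open Finset in
lemma count_supp {r : ℕ} (F : Finset ℚ) (hF : F.Nonempty) (P : Matrix (Fin r) (Fin r) ℚ)
    (hP : IsUnit P) (k : ℕ) :
    ((Fintype.piFinset fun _ : Fin r => F).filter
      fun v => ssz (Matrix.vecMul v P⁻¹) ≤ k).card ≤ 2 ^ r * F.card ^ k := by
  have hsub : ((Fintype.piFinset fun _ : Fin r => F).filter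
      fun v => ssz (Matrix.vecMul v P⁻¹) ≤ k) ⊆
      ((univ : Finset (Finset (Fin r))).filter fun T => T.card ≤ k).biUnion fun T =>
      ((Fintype.piFinset fun _ : Fin r => F).filter
      fun v => ∀ l, l ∉ T → Matrix.vecMul v P⁻¹ l = 0) := by
    intro v hv
    rw [mem_filter] at hv
    rw [mem_biUnion]
    refine ⟨univ.filter fun l => Matrix.vecMul v P⁻¹ l ≠ 0, ?_, ?_⟩
    · simp only [mem_filter, mem_univ, true_and]
      exact hv.2
    · rw [mem_filter]
      refine ⟨hv.1, fun l hl => ?_⟩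
      simpa using hl
  refine (card_le_card hsub).trans (card_biUnion_le.trans ?_)
  calc _ ≤ ∑ T ∈ (univ : Finset (Finset (Fin r))).filter (fun T => T.card ≤ k), F.card ^ k := by
        refine sum_le_sum fun T hT => (count_subspace F P hP T).trans ?_
        exact Nat.pow_le_pow_right hF.card_pos (mem_filter.1 hT).2
    _ ≤ 2 ^ r * F.card ^ k := by
        rw [sum_const, smul_eq_mul]
        gcongr
        refine (card_filter_le _ _).trans ?_
        simp

open Finset in
/-- counting the columns blocks -/
lemma count_C {m r : ℕ} (F : Finset ℚ) (hF : F.Nonempty) (e : Fin r → Fin m)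
    (he : Function.Injective e) (k : ℕ) (S : Finset (Fin m → Fin r → ℚ))
    (hS : ∀ C ∈ S, (∀ i j, C i j ∈ F) ∧ IsUnit (Matrix.of fun l => C (e l)) ∧
      ∀ i, ssz (Matrix.vecMul (C i) (Matrix.of fun l => C (e l))⁻¹) ≤ k) :
    S.card ≤ (2 ^ r * F.card ^ k) ^ (m - r) * (F.card ^ r) ^ r := by
  have hc : (F.card ^ r) ^ r =
      (Fintype.piFinset fun _ : Fin r => Fintype.piFinset fun _ : Fin r => F).card := by simp
  rw [hc]
  refine card_le_mul_card_image_of_maps_to (f := fun C l => C (e l)) ?_ _ ?_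
  · intro C hC
    simp only [Fintype.mem_piFinset]
    exact fun l j => (hS C hC).1 _ _
  · intro P _
    by_cases hP : IsUnit (Matrix.of P)
    · have hcc : Fintype.card {i // i ∉ Set.range e} = m - r := by
        rw [Fintype.card_subtype_compl]
        have : Fintype.card {x // x ∈ Set.range e} = r := by
          exact (Fintype.card_congr (Equiv.ofInjective e he)).symm.trans (Fintype.card_fin r)
        rw [this, Fintype.card_fin]
      have h2 : (2 ^ r * F.card ^ k) ^ (m - r) ≥ (Fintype.piFinset fun _ : {i // i ∉ Set.range e} =>
          ((Fintype.piFinset fun _ : Fin r => F).filter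
            fun v => ssz (Matrix.vecMul v (Matrix.of P)⁻¹) ≤ k)).card := by
        rw [Fintype.card_piFinset, prod_const, card_univ, hcc]
        gcongr
        exact count_supp F hF _ hP k
      refine le_trans ?_ h2
      refine card_le_card_of_injOn (fun C i => C i.1) ?_ ?_
      · intro C hC
        simp only [mem_coe, mem_filter] at hC
        simp only [mem_coe, mem_filter, Fintype.mem_piFinset]
        intro i
        obtain ⟨h1, h2, h3⟩ := hS C hC.1
        refine ⟨fun j => h1 _ _, ?_⟩
        have := h3 i.1
        rwa [hC.2] at this
      · intro C hC C' hC' h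
        simp only [mem_coe, mem_filter] at hC hC'
        funext i
        by_cases hi : i ∈ Set.range e
        · obtain ⟨l, rfl⟩ := hi
          rw [congrFun hC.2 l, congrFun hC'.2 l]
        · exact congrFun h ⟨i, hi⟩
    · rw [card_eq_zero.2]
      · exact Nat.zero_le _
      · rw [filter_eq_empty_iff]
        intro C hC hCP
        apply hP
        have := (hS C hC).2.1
        rwa [hCP] at this

open Finset in
/-- counting one column -/
lemma count_col {m r : ℕ} (F : Finset ℚ) (X : ℕ → ℕ)
    (hX : ∀ (k : ℕ) (c : Fin k → ℚ), (∀ i, c i ≠ 0) →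
      ((Fintype.piFinset fun _ : Fin k => F).filter fun x => ∑ i, c i * x i = 0).card ≤ X k)
    (e : Fin r → Fin m) (lam : Fin m → Fin r → ℚ) (i₀ : Fin m) (k : ℕ) (hk : ssz (lam i₀) = k) :
    ((Fintype.piFinset fun _ : Fin m => F).filter
      fun v => ∀ i, v i = ∑ l, lam i l * v (e l)).card ≤ F.card ^ (r - k) * X (k + 1) := by
  set T := univ.filter fun l => lam i₀ l ≠ 0 with hT
  have hTk : T.card = k := hk
  set o := T.orderEmbOfFin hTk with ho
  set c : Fin (k + 1) → ℚ := Fin.cons (-1) (fun t => lam i₀ (o t)) with hcdef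
  have hoT : ∀ t, o t ∈ T := fun t => orderEmbOfFin_mem T hTk t
  have hc : ∀ i, c i ≠ 0 := by
    intro i
    refine Fin.cases ?_ (fun t => ?_) i
    · simp [hcdef]
    · have := hoT t
      simp only [hcdef, Fin.cons_succ]
      exact (mem_filter.1 this).2
  have hcc : Fintype.card {l // l ∉ T} = r - k := by
    rw [Fintype.card_subtype_compl, Fintype.card_coe, hTk, Fintype.card_fin]
  have hle : F.card ^ (r - k) * ((Fintype.piFinset fun _ : Fin (k + 1) => F).filter
      fun x => ∑ i, c i * x i = 0).card ≤ F.card ^ (r - k) * X (k + 1) :=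
    Nat.mul_le_mul_left _ (hX (k + 1) c hc)
  refine le_trans ?_ hle
  have hpi : F.card ^ (r - k) = (Fintype.piFinset fun _ : {l // l ∉ T} => F).card := by
    rw [Fintype.card_piFinset, prod_const, card_univ, hcc]
  rw [hpi, ← card_product]
  refine card_le_card_of_injOn
    (fun v => (fun l => v (e l.1), Fin.cons (v i₀) fun t => v (e (o t)))) ?_ ?_
  · intro v hv
    simp only [mem_coe, mem_filter, Fintype.mem_piFinset] at hv
    simp only [mem_coe, mem_product, mem_filter, Fintype.mem_piFinset]
    refine ⟨fun l => hv.1 _, fun i => ?_, ?_⟩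
    · refine Fin.cases ?_ (fun t => ?_) i
      · simpa using hv.1 i₀
      · simpa using hv.1 _
    · rw [Fin.sum_univ_succ]
      simp only [hcdef, Fin.cons_zero, Fin.cons_succ]
      rw [hv.2 i₀]
      rw [← sum_subset (subset_univ T) (f := fun l => lam i₀ l * v (e l)) (by
        intro l _ hl
        have : lam i₀ l = 0 := by simpa [hT] using hl
        rw [this, zero_mul])]
      have himg : T = univ.map o.toEmbedding := by
        rw [ho, map_orderEmbOfFin_univ]
      have : ∑ l ∈ T, lam i₀ l * v (e l) = ∑ t, lam i₀ (o t) * v (e (o t)) := by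
        conv_lhs => rw [himg]
        rw [sum_map]
        rfl
      rw [this]
      ring
  · intro v hv w hw h
    simp only [mem_coe, mem_filter] at hv hw
    obtain ⟨h1, h2⟩ := Prod.mk.inj h
    have hel : ∀ l, v (e l) = w (e l) := by
      intro l
      by_cases hl : l ∈ T
      · have : l ∈ Set.range o := by rw [ho, range_orderEmbOfFin]; exact hl
        obtain ⟨t, rfl⟩ := this
        have := congrFun h2 t.succ
        simpa using this
      · exact congrFun h1 ⟨l, hl⟩
    funext i
    rw [hv.2 i, hw.2 i]
    exact sum_congr rfl fun l _ => by rw [hel l]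

open Finset in
lemma count_A {m n r : ℕ} (hr : 1 ≤ r) (F : Finset ℚ) (hF : F.Nonempty) (X : ℕ → ℕ)
    (hX : ∀ (k : ℕ) (c : Fin k → ℚ), (∀ i, c i ≠ 0) →
      ((Fintype.piFinset fun _ : Fin k => F).filter fun x => ∑ i, c i * x i = 0).card ≤ X k)
    (e : Fin r → Fin m) (g : Fin r → Fin n) (S : Finset (Matrix (Fin m) (Fin n) ℚ))
    (hS : ∀ A ∈ S, (∀ i j, A i j ∈ F) ∧ Good e g A) :
    S.card ≤ ∑ k ∈ Icc 1 r, (F.card ^ (r - k) * X (k + 1)) ^ (n - r) *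
      ((2 ^ r * F.card ^ k) ^ (m - r) * (F.card ^ r) ^ r) := by
  classical
  rcases S.eq_empty_or_nonempty with hS0 | ⟨A₀, hA₀⟩
  · rw [hS0]; simp
  have he := inj_of_isUnit_row e g A₀ (hS A₀ hA₀).2.1
  have hg := inj_of_isUnit_col e g A₀ (hS A₀ hA₀).2.1
  have hrm : r ≤ m := by simpa using Fintype.card_le_of_injective e he
  -- coefficient matrix
  set lam : (Fin m → Fin r → ℚ) → Fin m → Fin r → ℚ :=
    fun C i => Matrix.vecMul (C i) (Matrix.of fun l => C (e l))⁻¹ with hlam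
  set cc : Matrix (Fin m) (Fin n) ℚ → Fin m → Fin r → ℚ := fun A i j => A i (g j) with hcc
  set kk : (Fin m → Fin r → ℚ) → ℕ := fun C => univ.sup fun i => ssz (lam C i) with hkk
  have hrel : ∀ A ∈ S, ∀ i j, A i j = ∑ l, lam (cc A) i l * A (e l) j := by
    intro A hA i j
    obtain ⟨hu, hsp⟩ := (hS A hA).2
    obtain ⟨c, hc⟩ := hsp i
    have hu' : IsUnit (Matrix.of fun l => cc A (e l)) := hu
    have hdet := (Matrix.isUnit_iff_isUnit_det _).1 hu'
    have h1 : cc A i = Matrix.vecMul c (Matrix.of fun l => cc A (e l)) := by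
      funext t
      simp only [hcc, Matrix.vecMul, dotProduct, Matrix.of_apply]
      exact hc (g t)
    have h2 : lam (cc A) i = c := by
      simp only [hlam]
      rw [h1, Matrix.vecMul_vecMul, Matrix.mul_nonsing_inv _ hdet, Matrix.vecMul_one]
    rw [h2]
    exact hc j
  have hkr : ∀ A ∈ S, kk (cc A) ∈ Icc 1 r := by
    intro A hA
    rw [mem_Icc]
    constructor
    · by_contra hlt
      have h0 : kk (cc A) = 0 := by omega
      have hz : ∀ i l, lam (cc A) i l = 0 := by
        intro i l
        have h1 : ssz (lam (cc A) i) ≤ kk (cc A) :=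
          le_sup (f := fun i => ssz (lam (cc A) i)) (mem_univ i)
        have h2 : ssz (lam (cc A) i) = 0 := by omega
        unfold ssz at h2
        rw [card_eq_zero, filter_eq_empty_iff] at h2
        simpa using h2 (mem_univ l)
      have hA0 : A.submatrix e g = 0 := by
        ext a b
        rw [Matrix.submatrix_apply, hrel A hA]
        simp [hz]
      have hu := (hS A hA).2.1
      rw [hA0] at hu
      have : Nonempty (Fin r) := ⟨⟨0, by omega⟩⟩
      exact not_isUnit_zero hu
    · refine Finset.sup_le fun i _ => ?_
      unfold ssz
      exact (card_filter_le _ _).trans (by simp)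
  rw [card_eq_sum_card_fiberwise (f := fun A => kk (cc A)) (t := Icc 1 r) hkr]
  refine sum_le_sum fun k hk => ?_
  set Sk := S.filter fun A => kk (cc A) = k with hSk
  have himg : (Sk.image cc).card ≤ (2 ^ r * F.card ^ k) ^ (m - r) * (F.card ^ r) ^ r := by
    refine count_C F hF e he k _ ?_
    intro C hC
    obtain ⟨A, hA, rfl⟩ := mem_image.1 hC
    rw [hSk, mem_filter] at hA
    refine ⟨fun i j => (hS A hA.1).1 _ _, (hS A hA.1).2.1, fun i => ?_⟩
    rw [← hA.2]
    exact le_sup (f := fun i => ssz (lam (cc A) i)) (mem_univ i)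
  refine le_trans ?_ (Nat.mul_le_mul_left _ himg)
  refine card_le_mul_card_image_of_maps_to (f := cc) (fun A hA => mem_image_of_mem _ hA) _ ?_
  intro C hC
  obtain ⟨A₁, hA₁, hA₁C⟩ := mem_image.1 hC
  have hkC : kk C = k := by
    rw [← hA₁C]; exact (mem_filter.1 hA₁).2
  have : Nonempty (Fin m) := ⟨e ⟨0, by omega⟩⟩
  obtain ⟨i₀, -, hi₀⟩ := exists_mem_eq_sup univ univ_nonempty fun i => ssz (lam C i)
  have hi₀' : ssz (lam C i₀) = k := by rw [← hi₀]; exact hkC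
  have hcol := count_col F X hX e (lam C) i₀ k hi₀'
  have hcard : Fintype.card {j // j ∉ Set.range g} = n - r := by
    rw [Fintype.card_subtype_compl]
    have : Fintype.card {x // x ∈ Set.range g} = r := by
      exact (Fintype.card_congr (Equiv.ofInjective g hg)).symm.trans (Fintype.card_fin r)
    rw [this, Fintype.card_fin]
  have h2 : (Fintype.piFinset fun _ : {j // j ∉ Set.range g} =>
      (Fintype.piFinset fun _ : Fin m => F).filter
      fun v => ∀ i, v i = ∑ l, lam C i l * v (e l)).card
        ≤ (F.card ^ (r - k) * X (k + 1)) ^ (n - r) := by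
    rw [Fintype.card_piFinset, prod_const, card_univ, hcard]
    gcongr
  refine le_trans ?_ h2
  refine card_le_card_of_injOn (fun A j i => A i j.1) ?_ ?_
  · intro A hA
    simp only [mem_coe, mem_filter, hSk] at hA
    simp only [mem_coe, mem_filter, Fintype.mem_piFinset]
    intro j
    refine ⟨fun i => (hS A hA.1.1).1 _ _, fun i => ?_⟩
    have := hrel A hA.1.1 i j.1
    rwa [hA.2] at this
  · intro A hA A' hA' h
    simp only [mem_coe, mem_filter] at hA hA'
    ext i j
    by_cases hj : j ∈ Set.range g
    · obtain ⟨t, rfl⟩ := hj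
      have := congrFun (congrFun (hA.2.trans hA'.2.symm) i) t
      exact this
    · exact congrFun (congrFun h ⟨j, hj⟩) i

lemma FN_mono_mem {H : ℝ} (hH : 0 ≤ H) {x : ℚ} (h : x ∈ Farey H) : x ∈ FN ⌊H⌋₊ := by
  obtain ⟨h1, h2⟩ := h
  rw [mem_FN]
  refine ⟨?_, Nat.le_floor h2⟩
  have : x.num.natAbs ≤ ⌊H⌋₊ := by
    apply Nat.le_floor
    rw [Nat.cast_natAbs]
    exact_mod_cast h1
  rw [Int.abs_eq_natAbs]
  exact_mod_cast this

lemma algebra_bound (C H δ ε : ℝ) (hH : 0 < H) (k a b d r : ℕ)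
    (hδ : δ * b = ε) :
    ((3 * H ^ 2) ^ a * (C * H ^ (((k + 1 : ℕ) : ℝ) + δ))) ^ b *
      ((2 ^ r * (3 * H ^ 2) ^ k) ^ d * ((3 * H ^ 2) ^ r) ^ r) =
    ((3 ^ a * C) ^ b * ((2 ^ r * 3 ^ k) ^ d * (3 ^ r) ^ r)) *
      H ^ ((((2 * a + k + 1) * b + 2 * k * d + 2 * r * r : ℕ) : ℝ) + ε) := by
  have h1 : (H ^ δ) ^ b = H ^ ε := by
    rw [← Real.rpow_mul_natCast hH.le, hδ]
  rw [Real.rpow_add hH, Real.rpow_natCast, Real.rpow_add hH, Real.rpow_natCast, ← h1]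
  generalize H ^ δ = h
  simp only [mul_pow, ← pow_mul, pow_add]
  ring

open Finset in
lemma main_bound (m n r : ℕ) (hnm : n ≥ m) (hmr : m > r) (hr : 1 ≤ r) (ε : ℝ) (hε : 0 < ε) :
    ∃ D : ℕ → ℝ, (∀ k, 0 ≤ D k) ∧ ∀ H : ℝ, H ≥ 2 →
      (Set.ncard {A : Matrix (Fin m) (Fin n) ℚ |
            (∀ i j, A i j ∈ Farey H) ∧ A.rank = r} : ℝ) ≤
      ∑ k ∈ Icc 1 r, D k *
        H ^ ((((2 * (r - k) + k + 1) * (n - r) + 2 * k * (m - r) + 2 * r * r : ℕ) : ℝ) + ε) := by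
  classical
  have hb0 : (0:ℝ) < ((n - r : ℕ) : ℝ) := by exact_mod_cast (by omega : 0 < n - r)
  set δ := ε / ((n - r : ℕ) : ℝ) with hδ
  have hδ0 : 0 < δ := by positivity
  have hδb : δ * ((n - r : ℕ) : ℝ) = ε := by rw [hδ, div_mul_cancel₀ _ hb0.ne']
  choose Cf hCf hcount using fun k => key_count k δ hδ0
  set Pn : ℕ := (univ : Finset ((Fin r → Fin m) × (Fin r → Fin n))).card with hPn
  refine ⟨fun k => Pn * ((3 ^ (r - k) * Cf (k + 1)) ^ (n - r) *
    ((2 ^ r * 3 ^ k) ^ (m - r) * (3 ^ r) ^ r)), fun k => ?_, fun H hH => ?_⟩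
  · have := (hCf (k + 1)).le
    positivity
  have hH0 : 0 < H := by linarith
  set N := ⌊H⌋₊ with hN
  have hN1 : 1 ≤ N := by
    apply Nat.le_floor
    push_cast; linarith
  have hNH : (N:ℝ) ≤ H := Nat.floor_le hH0.le
  set X : ℕ → ℕ := fun k => ⌊Cf k * (N:ℝ) ^ (k + δ)⌋₊ with hXdef
  have hX : ∀ (k : ℕ) (c : Fin k → ℚ), (∀ i, c i ≠ 0) →
      ((Fintype.piFinset fun _ : Fin k => FN N).filter
        fun x => ∑ i, c i * x i = 0).card ≤ X k :=
    fun k c hc => Nat.le_floor (hcount k N hN1 c hc)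
  have hF : (FN N).Nonempty := ⟨0, by rw [mem_FN]; simp; omega⟩
  set Q : Finset (Matrix (Fin m) (Fin n) ℚ) :=
    Fintype.piFinset fun _ : Fin m => Fintype.piFinset fun _ : Fin n => FN N with hQ
  have hQm : ∀ A : Matrix (Fin m) (Fin n) ℚ, A ∈ Q ↔ ∀ i j, A i j ∈ FN N := by
    intro A
    have h := Fintype.mem_piFinset (t := fun _ : Fin m => Fintype.piFinset fun _ : Fin n => FN N)
      (f := fun i j => A i j)
    exact h.trans (forall_congr' fun i => Fintype.mem_piFinset)
  set Y : ℕ → ℕ := fun k => ((FN N).card ^ (r - k) * X (k + 1)) ^ (n - r) *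
      ((2 ^ r * (FN N).card ^ k) ^ (m - r) * ((FN N).card ^ r) ^ r) with hY
  have h1 : Set.ncard {A : Matrix (Fin m) (Fin n) ℚ |
            (∀ i j, A i j ∈ Farey H) ∧ A.rank = r} ≤ Pn * ∑ k ∈ Icc 1 r, Y k := by
    set U := (univ : Finset ((Fin r → Fin m) × (Fin r → Fin n))).biUnion
      fun q => Q.filter fun A => Good q.1 q.2 A with hU
    have hsub : {A : Matrix (Fin m) (Fin n) ℚ |
            (∀ i j, A i j ∈ Farey H) ∧ A.rank = r} ⊆ (U : Set (Matrix (Fin m) (Fin n) ℚ)) := by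
      rintro A ⟨hA1, hA2⟩
      obtain ⟨e, g, hgood⟩ := exists_good A hA2
      rw [mem_coe, hU, mem_biUnion]
      refine ⟨(e, g), mem_univ _, mem_filter.2 ⟨?_, hgood⟩⟩
      rw [hQm]
      exact fun i j => FN_mono_mem hH0.le (hA1 i j)
    have h2 := Set.ncard_le_ncard hsub U.finite_toSet
    rw [Set.ncard_coe_finset] at h2
    refine h2.trans (card_biUnion_le.trans ?_)
    rw [hPn, ← smul_eq_mul, ← sum_const]
    refine sum_le_sum fun q _ => ?_
    refine count_A hr (FN N) hF X hX q.1 q.2 _ ?_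
    intro A hA
    rw [mem_filter] at hA
    exact ⟨(hQm A).1 hA.1, hA.2⟩
  have hFc : ((FN N).card : ℝ) ≤ 3 * H ^ 2 := by
    calc ((FN N).card : ℝ) ≤ 3 * (N:ℝ) ^ 2 := by exact_mod_cast card_FN N
      _ ≤ 3 * H ^ 2 := by gcongr
  have hXc : ∀ k, (X k : ℝ) ≤ Cf k * H ^ ((k:ℝ) + δ) := by
    intro k
    have := (hCf k).le
    calc (X k : ℝ) ≤ Cf k * (N:ℝ) ^ ((k:ℝ) + δ) := Nat.floor_le (by positivity)
      _ ≤ _ := by gcongr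
  calc (Set.ncard {A : Matrix (Fin m) (Fin n) ℚ |
            (∀ i j, A i j ∈ Farey H) ∧ A.rank = r} : ℝ) ≤ Pn * ∑ k ∈ Icc 1 r, (Y k : ℝ) := by
        exact_mod_cast h1
    _ = ∑ k ∈ Icc 1 r, (Pn : ℝ) * (Y k : ℝ) := by rw [mul_sum]
    _ ≤ _ := by
        refine sum_le_sum fun k hk => ?_
        rw [mul_assoc]
        refine mul_le_mul_of_nonneg_left ?_ (Nat.cast_nonneg _)
        rw [← algebra_bound (Cf (k + 1)) H δ ε hH0 k (r - k) (n - r) (m - r) r hδb]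
        simp only [hY]
        push_cast
        have := hXc (k + 1)
        push_cast at this
        have hpos := (hCf (k + 1)).le
        gcongr

theorem stmt0 (m n r : ℕ) (hnm : n ≥ m) (hmr : m > r) :
    ∀ ε > (0 : ℝ), ∃ C : ℝ, ∀ H : ℝ, H ≥ 2 →
      (2 * m ≥ n + r →
        (Set.ncard {A : Matrix (Fin m) (Fin n) ℚ |
            (∀ i j, A i j ∈ Farey H) ∧ A.rank = r} : ℝ) ≤
          C * H ^ ((2 * m * r + n * r + n : ℝ) - r ^ 2 - r + ε)) ∧
      (2 * m < n + r →
        (Set.ncard {A : Matrix (Fin m) (Fin n) ℚ |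
            (∀ i j, A i j ∈ Farey H) ∧ A.rank = r} : ℝ) ≤
          C * H ^ ((2 * n * r + 2 * m : ℝ) - 2 * r + ε)) := by
  intro ε hε
  rcases Nat.eq_zero_or_pos r with hr | hr
  · subst hr
    refine ⟨1, fun H hH => ?_⟩
    have h1 : (Set.ncard {A : Matrix (Fin m) (Fin n) ℚ |
            (∀ i j, A i j ∈ Farey H) ∧ A.rank = 0} : ℝ) ≤ 1 := by
      have : Set.ncard {A : Matrix (Fin m) (Fin n) ℚ |
            (∀ i j, A i j ∈ Farey H) ∧ A.rank = 0} ≤ 1 := by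
        rw [← Set.ncard_singleton (0 : Matrix (Fin m) (Fin n) ℚ)]
        refine Set.ncard_le_ncard ?_ (Set.finite_singleton _)
        rintro A ⟨-, hA⟩
        obtain ⟨e, g, -, hsp⟩ := exists_good A hA
        rw [Set.mem_singleton_iff]
        ext i j
        obtain ⟨c, hc⟩ := hsp i
        simpa using hc j
      exact_mod_cast this
    have hH1 : (1:ℝ) ≤ H := by linarith
    constructor <;> intro _ <;> rw [one_mul] <;> refine h1.trans (Real.one_le_rpow hH1 ?_) <;>
      push_cast <;> ring_nf <;> positivity
  · obtain ⟨D, hD, h⟩ := main_bound m n r hnm hmr hr ε hε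
    refine ⟨∑ k ∈ Finset.Icc 1 r, D k, fun H hH => ?_⟩
    have hH1 : (1:ℝ) ≤ H := by linarith
    constructor
    · intro hc
      refine (h H hH).trans ?_
      rw [Finset.sum_mul]
      refine Finset.sum_le_sum fun k hk => ?_
      obtain ⟨hk1, hk2⟩ := Finset.mem_Icc.1 hk
      refine mul_le_mul_of_nonneg_left ?_ (hD k)
      refine Real.rpow_le_rpow_of_exponent_le hH1 ?_
      push_cast [Nat.cast_sub hk2, Nat.cast_sub (show r ≤ n by omega), Nat.cast_sub hmr.le]
      have e1 : (k:ℝ) ≤ r := by exact_mod_cast hk2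
      have e2 : (n:ℝ) + r ≤ 2 * m := by exact_mod_cast hc
      nlinarith [mul_nonneg (sub_nonneg.2 e1) (sub_nonneg.2 e2)]
    · intro hc
      refine (h H hH).trans ?_
      rw [Finset.sum_mul]
      refine Finset.sum_le_sum fun k hk => ?_
      obtain ⟨hk1, hk2⟩ := Finset.mem_Icc.1 hk
      refine mul_le_mul_of_nonneg_left ?_ (hD k)
      refine Real.rpow_le_rpow_of_exponent_le hH1 ?_
      push_cast [Nat.cast_sub hk2, Nat.cast_sub (show r ≤ n by omega), Nat.cast_sub hmr.le]
      have e1 : (1:ℝ) ≤ k := by exact_mod_cast hk1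
      have e2 : 2 * (m:ℝ) ≤ n + r := by exact_mod_cast hc.le
      nlinarith [mul_nonneg (sub_nonneg.2 e1) (sub_nonneg.2 e2)]
end

section
/- Let n ≥ m ≥ r ≥ 1 be integers. There exists a constant c = c(m, n, r) > 0 such that for all real H ≥ 1 the number of m×n matrices with all entries in F(H) and of rank exactly r is at least c·H^{2nr}. -/
lemma sum_inv_sq (A : ℕ) (hA : 2 ≤ A) : ∑ d ∈ Finset.Icc 2 A, (1:ℝ) / (d:ℝ)^2 ≤ 3/4 - 1/A := by
  induction A, hA using Nat.le_induction with
  | base => norm_num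
  | succ n hn ih =>
    rw [Finset.sum_Icc_succ_top (by omega)]
    have h0 : (2:ℝ) ≤ n := by exact_mod_cast hn
    have : (1:ℝ) / ((n+1:ℕ):ℝ)^2 ≤ 1/n - 1/((n+1:ℕ):ℝ) := by
      push_cast
      rw [div_sub_div _ _ (by positivity) (by positivity), div_le_div_iff₀ (by positivity) (by positivity)]
      nlinarith
    linarith

lemma sum_inv_sq' (A : ℕ) : ∑ d ∈ Finset.Icc 2 A, (1:ℝ) / (d:ℝ)^2 ≤ 3/4 := by
  by_cases hA : 2 ≤ A
  · have := sum_inv_sq A hA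
    have h : (0:ℝ) ≤ 1 / A := by positivity
    linarith
  · rw [Finset.Icc_eq_empty (by omega)]; norm_num

lemma coprime_count (A B : ℕ) :
    (A * B / 4 : ℝ) ≤ (((Finset.Ioc 0 A ×ˢ Finset.Ioc 0 B).filter
      (fun p => Nat.Coprime p.1 p.2)).card : ℝ) := by
  set X := Finset.Ioc 0 A ×ˢ Finset.Ioc 0 B
  have hsub : X ⊆ X.filter (fun p => Nat.Coprime p.1 p.2) ∪
      (Finset.Icc 2 A).biUnion (fun d => ((Finset.Ioc 0 A).filter (d ∣ ·)) ×ˢ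
        ((Finset.Ioc 0 B).filter (d ∣ ·))) := by
    rintro ⟨a, b⟩ hp
    have hp' := hp
    simp only [X, Finset.mem_product, Finset.mem_Ioc] at hp'
    by_cases hc : Nat.Coprime a b
    · exact Finset.mem_union_left _ (Finset.mem_filter.2 ⟨hp, hc⟩)
    · apply Finset.mem_union_right
      simp only [Finset.mem_biUnion, Finset.mem_product, Finset.mem_filter, Finset.mem_Ioc, Finset.mem_Icc]
      refine ⟨Nat.gcd a b, ⟨?_, ?_⟩, ⟨hp'.1, Nat.gcd_dvd_left _ _⟩, ⟨hp'.2, Nat.gcd_dvd_right _ _⟩⟩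
      · have : 0 < Nat.gcd a b := Nat.gcd_pos_of_pos_left _ hp'.1.1
        have : Nat.gcd a b ≠ 1 := hc
        omega
      · exact (Nat.gcd_le_left _ hp'.1.1).trans hp'.1.2
  have h1 := (Finset.card_le_card hsub).trans ((Finset.card_union_le _ _).trans
    (Nat.add_le_add_left Finset.card_biUnion_le _))
  simp only [Finset.card_product, Nat.Ioc_filter_dvd_card_eq_div] at h1
  have hX : X.card = A * B := by simp [X]
  rw [hX] at h1
  have h2 : ((A * B : ℕ) : ℝ) ≤ ((X.filter (fun p => Nat.Coprime p.1 p.2)).card : ℝ)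
     + ∑ d ∈ Finset.Icc 2 A, ((A / d : ℕ) : ℝ) * ((B / d : ℕ) : ℝ) := by exact_mod_cast h1
  have h3 : ∑ d ∈ Finset.Icc 2 A, ((A / d : ℕ) : ℝ) * ((B / d : ℕ) : ℝ) ≤
      (A * B : ℝ) * ∑ d ∈ Finset.Icc 2 A, (1:ℝ) / (d:ℝ)^2 := by
    rw [Finset.mul_sum]
    apply Finset.sum_le_sum
    intro d hd
    calc ((A / d : ℕ) : ℝ) * ((B / d : ℕ) : ℝ) ≤ ((A:ℝ)/d) * ((B:ℝ)/d) := by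
          gcongr <;> exact Nat.cast_div_le
      _ = _ := by ring
  have h4 := mul_le_mul_of_nonneg_left (sum_inv_sq' A) (by positivity : (0:ℝ) ≤ A * B)
  push_cast at h2
  linarith

lemma pairs (k : ℕ) (hk : 1 ≤ k) (H : ℝ) (hH : 8 * k ≤ H) :
    ∃ P : Finset (ℕ × ℕ), (∀ p ∈ P, 1 ≤ p.1 ∧ p.1 * k ≤ p.2 ∧ (p.2 : ℝ) ≤ H ∧ Nat.Coprime p.1 p.2) ∧
      1 / (256 * k ^ 2) * H ^ 2 ≤ (P.card : ℝ) := by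
  have hk' : (1:ℝ) ≤ k := by exact_mod_cast hk
  set N := ⌊H / (8 * k)⌋₊ with hN
  have hN1 : (N:ℝ) ≤ H / (8 * k) := Nat.floor_le (div_nonneg (by linarith) (by positivity))
  have hN2 : H / (8 * k) < N + 1 := Nat.lt_floor_add_one _
  have hN3 : 1 ≤ N := Nat.le_floor (by rw [le_div_iff₀ (by positivity)]; simpa using hH)
  have hN3' : (1:ℝ) ≤ N := by exact_mod_cast hN3
  rw [le_div_iff₀ (by positivity)] at hN1
  rw [div_lt_iff₀ (by positivity)] at hN2
  set Q := (Finset.Ioc 0 N ×ˢ Finset.Ioc 0 (8 * k * N)).filter (fun p => Nat.Coprime p.1 p.2) with hQ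
  refine ⟨Q.filter (fun p => N * k ≤ p.2), ?_, ?_⟩
  · rintro ⟨a, b⟩ hp
    simp only [hQ, Finset.mem_filter, Finset.mem_product, Finset.mem_Ioc] at hp
    obtain ⟨⟨⟨⟨h1, h2⟩, h3, h4⟩, h5⟩, h6⟩ := hp
    refine ⟨h1, (Nat.mul_le_mul_right k h2).trans h6, ?_, h5⟩
    have : (b:ℝ) ≤ ((8 * k * N : ℕ) : ℝ) := by exact_mod_cast h4
    push_cast at this
    simp only
    linarith
  · have h1 := coprime_count N (8 * k * N)
    rw [← hQ] at h1
    have h2 : (Q.filter (fun p => ¬ N * k ≤ p.2)).card ≤ N * (N * k) := by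
      have : Q.filter (fun p => ¬ N * k ≤ p.2) ⊆ Finset.Ioc 0 N ×ˢ Finset.Ioc 0 (N * k) := by
        rintro ⟨a, b⟩ hp
        simp only [hQ, Finset.mem_filter, Finset.mem_product, Finset.mem_Ioc] at hp ⊢
        refine ⟨hp.1.1.1, hp.1.1.2.1, by omega⟩
      simpa using Finset.card_le_card this
    have h3 := Finset.card_filter_add_card_filter_not (s := Q) (fun p => N * k ≤ p.2)
    have h2' : ((Q.filter (fun p => ¬ N * k ≤ p.2)).card : ℝ) ≤ N * (N * k) := by exact_mod_cast h2
    have h3' : ((Q.filter (fun p => N * k ≤ p.2)).card : ℝ) + ((Q.filter (fun p => ¬ N * k ≤ p.2)).card : ℝ) = Q.card := by exact_mod_cast h3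
    have h4 : (k * N ^ 2 : ℝ) ≤ ((Q.filter (fun p => N * k ≤ p.2)).card : ℝ) := by
      push_cast at h1; nlinarith
    refine le_trans ?_ h4
    have h5 : H ≤ 16 * k * N := by nlinarith
    have h6 : H ^ 2 ≤ (16 * k * N) ^ 2 := by gcongr; linarith
    have h7 : (N:ℝ)^2 ≤ k * N^2 := by nlinarith [sq_nonneg (N:ℝ)]
    refine le_trans ?_ h7
    rw [one_div, inv_mul_le_iff₀ (by positivity)]
    linarith

lemma farey_finite (H : ℝ) : (Farey H).Finite := by
  have : Set.Finite ((Set.Icc (-⌈H⌉) ⌈H⌉) ×ˢ (Set.Iic ⌊H⌋₊)) := 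
    (Set.finite_Icc _ _).prod (Set.finite_Iic _)
  refine Set.Finite.of_finite_image (f := fun x : ℚ => (x.num, x.den)) (this.subset ?_) ?_
  · rintro _ ⟨x, ⟨h1, h2⟩, rfl⟩
    rw [abs_le] at h1
    refine ⟨⟨?_, ?_⟩, ?_⟩
    · have : -(⌈H⌉:ℝ) ≤ x.num := by linarith [Int.le_ceil H]
      exact_mod_cast this
    · have : (x.num:ℝ) ≤ ⌈H⌉ := by linarith [Int.le_ceil H]
      exact_mod_cast this
    · exact Nat.le_floor h2
  · intro x _ y _ h
    simp only [Prod.mk.injEq] at h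
    exact Rat.ext h.1 h.2

lemma frac_num_den (a b : ℕ) (hb : 1 ≤ b) (h : Nat.Coprime a b) :
    ((a:ℚ) / b).num = a ∧ ((a:ℚ)/b).den = b := by
  constructor
  · have := Rat.num_div_eq_of_coprime (a := a) (b := b) (by exact_mod_cast hb) (by simpa using h)
    simpa using this
  · have := Rat.den_div_eq_of_coprime (a := a) (b := b) (by exact_mod_cast hb) (by simpa using h)
    simp only [Int.cast_natCast] at this
    exact Int.ofNat.inj this

lemma sets (k : ℕ) (hk : 1 ≤ k) (H : ℝ) (hH : 1 ≤ H) :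
    ∃ T D : Finset ℚ, (∀ x ∈ T, x ∈ Farey H ∧ 0 ≤ x ∧ x * k ≤ 1) ∧ (∀ x ∈ D, x ∈ Farey H ∧ 1 ≤ x) ∧
      1 / (256 * k ^ 2) * H ^ 2 ≤ (T.card : ℝ) ∧ 1 / (256 * k ^ 2) * H ^ 2 ≤ (D.card : ℝ) := by
  have hk' : (1:ℝ) ≤ k := by exact_mod_cast hk
  by_cases h8 : 8 * k ≤ H
  · obtain ⟨P, hP, hc⟩ := pairs k hk H h8
    have hPb : ∀ p ∈ P, p.1 ≤ p.2 := fun p hp =>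
      le_trans (Nat.le_mul_of_pos_right _ hk) (hP p hp).2.1
    refine ⟨P.image (fun p => (p.1:ℚ) / p.2), P.image (fun p => (p.2:ℚ) / p.1), ?_, ?_, ?_, ?_⟩
    · intro x hx
      obtain ⟨⟨a, b⟩, hp, rfl⟩ := Finset.mem_image.1 hx
      have hab := hPb _ hp
      obtain ⟨h1, h2, h3, h4⟩ := hP _ hp
      simp only at h1 h2 h3 h4 hab ⊢
      have hb : 1 ≤ b := h1.trans hab
      have hbq : (0:ℚ) < b := by exact_mod_cast hb
      have habr : (a:ℝ) ≤ b := by exact_mod_cast hab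
      obtain ⟨e1, e2⟩ := frac_num_den a b hb h4
      refine ⟨⟨?_, ?_⟩, by positivity, ?_⟩
      · rw [e1]; simp; linarith
      · rw [e2]; exact h3
      · rw [div_mul_eq_mul_div, div_le_one hbq]; exact_mod_cast h2
    · intro x hx
      obtain ⟨⟨a, b⟩, hp, rfl⟩ := Finset.mem_image.1 hx
      have hab := hPb _ hp
      obtain ⟨h1, h2, h3, h4⟩ := hP _ hp
      simp only at h1 h2 h3 h4 hab ⊢
      have haq : (0:ℚ) < a := by exact_mod_cast h1
      have habr : (a:ℝ) ≤ b := by exact_mod_cast hab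
      obtain ⟨e1, e2⟩ := frac_num_den b a h1 h4.symm
      refine ⟨⟨?_, ?_⟩, ?_⟩
      · rw [e1]; simpa using h3
      · rw [e2]; linarith
      · rw [le_div_iff₀ haq]; simpa using hab
    · rw [Finset.card_image_of_injOn]
      · exact hc
      · rintro ⟨a, b⟩ hp ⟨a', b'⟩ hp' h
        have q := hP _ hp
        have q' := hP _ hp'
        obtain ⟨e1, e2⟩ := frac_num_den a b (q.1.trans (hPb _ hp)) q.2.2.2
        obtain ⟨e1', e2'⟩ := frac_num_den a' b' (q'.1.trans (hPb _ hp')) q'.2.2.2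
        simp only at h
        rw [h] at e1 e2
        rw [e1'] at e1; rw [e2'] at e2
        ext
        · exact_mod_cast e1.symm
        · exact e2.symm
    · rw [Finset.card_image_of_injOn]
      · exact hc
      · rintro ⟨a, b⟩ hp ⟨a', b'⟩ hp' h
        have q := hP _ hp
        have q' := hP _ hp'
        obtain ⟨e1, e2⟩ := frac_num_den b a q.1 q.2.2.2.symm
        obtain ⟨e1', e2'⟩ := frac_num_den b' a' q'.1 q'.2.2.2.symm
        simp only at h
        rw [h] at e1 e2
        rw [e1'] at e1; rw [e2'] at e2
        ext
        · exact e2.symm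
        · exact_mod_cast e1.symm
  · have hle : 1 / (256 * k ^ 2) * H ^ 2 ≤ (1:ℝ) := by
      push Not at h8
      rw [one_div, inv_mul_le_iff₀ (by positivity)]
      have : H ^ 2 ≤ (8 * k) ^ 2 := by gcongr
      nlinarith
    refine ⟨{0}, {1}, ?_, ?_, by simpa using hle, by simpa using hle⟩
    · intro x hx
      rw [Finset.mem_singleton] at hx
      subst hx
      refine ⟨⟨?_, ?_⟩, ?_, ?_⟩ <;> simp <;> linarith
    · intro x hx
      rw [Finset.mem_singleton] at hx
      subst hx
      refine ⟨⟨?_, ?_⟩, ?_⟩ <;> simp <;> linarith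

lemma rank_lem (m n r : ℕ) (hmr : r ≤ m) (hnr : r ≤ n) (hr : 1 ≤ r) (A : Matrix (Fin m) (Fin n) ℚ)
    (h0 : ∀ i j, r ≤ i.val → A i j = 0)
    (hd : ∀ i j, i.val < r → i.val = j.val → 1 ≤ A i j)
    (ht : ∀ i j, i.val < r → i.val ≠ j.val → 0 ≤ A i j ∧ A i j * r ≤ 1) : A.rank = r := by
  apply le_antisymm
  · have : A = (Matrix.of fun (i : Fin m) (k : Fin r) => if i.val = k.val then (1:ℚ) else 0) *
        (A.submatrix (Fin.castLE hmr) id) := by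
      ext i j
      rw [Matrix.mul_apply]
      by_cases hi : i.val < r
      · rw [Finset.sum_eq_single ⟨i.val, hi⟩]
        · simp
        · intro k _ hk
          have : i.val ≠ k.val := fun h => hk (Fin.ext h.symm)
          simp [this]
        · simp
      · rw [h0 i j (by omega), Finset.sum_eq_zero]
        intro k _
        have : i.val ≠ k.val := by omega
        simp [this]
    rw [this]
    refine (Matrix.rank_mul_le_left _ _).trans ((Matrix.rank_le_card_width _).trans ?_)
    simp
  · set B := A.submatrix (Fin.castLE hmr) (Fin.castLE hnr) with hB
    have hdet : B.det ≠ 0 := by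
      apply det_ne_zero_of_sum_row_lt_diag
      intro k
      have hrq : (0:ℚ) < r := by exact_mod_cast hr
      have hdk := hd (Fin.castLE hmr k) (Fin.castLE hnr k) k.2 rfl
      have h1 : (1:ℝ) ≤ ‖B k k‖ := by
        rw [← Rat.norm_cast_real, Real.norm_eq_abs]
        refine le_trans ?_ (le_abs_self _)
        exact_mod_cast hdk
      refine lt_of_lt_of_le ?_ h1
      have h2 : ∀ j ∈ Finset.univ.erase k, ‖B k j‖ ≤ 1 / (r:ℝ) := by
        intro j hj
        have hne : (k:ℕ) ≠ j := fun h => (Finset.mem_erase.1 hj).1 (Fin.ext h.symm)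
        obtain ⟨h3, h4⟩ := ht (Fin.castLE hmr k) (Fin.castLE hnr j) k.2 hne
        rw [← le_div_iff₀ hrq] at h4
        rw [← Rat.norm_cast_real, Real.norm_eq_abs, abs_of_nonneg (by exact_mod_cast h3)]
        have h5 : ((A (Fin.castLE hmr k) (Fin.castLE hnr j) : ℚ) : ℝ) ≤ ((1 / (r:ℚ) : ℚ) : ℝ) := Rat.cast_le.2 h4
        simpa [B] using h5
      refine lt_of_le_of_lt (Finset.sum_le_card_nsmul _ _ _ h2) ?_
      rw [Finset.card_erase_of_mem (Finset.mem_univ _)]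
      simp only [Finset.card_univ, Fintype.card_fin, nsmul_eq_mul]
      rw [mul_one_div, div_lt_one (by exact_mod_cast hr)]
      exact_mod_cast (by omega : r - 1 < r)
    have hBr : B.rank = r := by
      rw [Matrix.rank_of_isUnit _ ((Matrix.isUnit_iff_isUnit_det _).2 hdet.isUnit)]; simp
    rw [← hBr]
    exact Matrix.rank_submatrix_le _ _ _

theorem stmt1 (m n r : ℕ) (hnm : n ≥ m) (hmr : m ≥ r) (hr : r ≥ 1) :
    ∃ c : ℝ, c > 0 ∧ ∀ H : ℝ, H ≥ 1 →
      c * H ^ ((2 * n * r : ℕ) : ℝ) ≤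
        (Set.ncard {A : Matrix (Fin m) (Fin n) ℚ |
            (∀ i j, A i j ∈ Farey H) ∧ A.rank = r} : ℝ) := by
  have hr' : (1:ℝ) ≤ r := by exact_mod_cast hr
  refine ⟨(1 / (256 * r ^ 2)) ^ (n * r), by positivity, ?_⟩
  intro H hH
  obtain ⟨T, D, hT, hD, hTc, hDc⟩ := sets r hr H hH
  let S : Fin m → Fin n → Finset ℚ := fun i j =>
    if i.val < r then (if i.val = j.val then D else T) else {0}
  let X : Finset (Fin m → Fin n → ℚ) := Fintype.piFinset fun i => Fintype.piFinset (S i)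
  have hX : (X : Set (Fin m → Fin n → ℚ)) ⊆ {A : Matrix (Fin m) (Fin n) ℚ |
            (∀ i j, A i j ∈ Farey H) ∧ A.rank = r} := by
    intro A hA
    have hA' : ∀ i j, A i j ∈ S i j := by
      intro i j
      have := Fintype.mem_piFinset.1 (Finset.mem_coe.1 hA) i
      exact Fintype.mem_piFinset.1 this j
    refine ⟨?_, rank_lem m n r hmr (hmr.trans hnm) hr A ?_ ?_ ?_⟩
    · intro i j
      have h := hA' i j
      simp only [S] at h
      split_ifs at h with h1 h2
      · exact (hD _ h).1
      · exact (hT _ h).1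
      · rw [Finset.mem_singleton] at h
        rw [h]
        refine ⟨?_, ?_⟩ <;> simp <;> linarith
    · intro i j hi
      have h := hA' i j
      simpa [S, not_lt.2 hi] using h
    · intro i j hi hij
      have h := hA' i j
      simp only [S, if_pos hi, if_pos hij] at h
      exact (hD _ h).2
    · intro i j hi hij
      have h := hA' i j
      simp only [S, if_pos hi, if_neg hij] at h
      exact (hT _ h).2
  have hfin : Set.Finite {A : Matrix (Fin m) (Fin n) ℚ |
            (∀ i j, A i j ∈ Farey H) ∧ A.rank = r} := by
    have : Set.Finite (Set.pi Set.univ fun _ : Fin m => Set.pi Set.univ fun _ : Fin n => Farey H) :=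
      Set.Finite.pi fun _ => Set.Finite.pi fun _ => farey_finite H
    refine this.subset ?_
    intro A hA i _ j _
    exact hA.1 i j
  have hcard := Set.ncard_le_ncard hX hfin
  rw [Set.ncard_coe_finset] at hcard
  refine le_trans ?_ (Nat.cast_le.2 hcard)
  set c : ℝ := 1 / (256 * r ^ 2) with hc
  have hc0 : 0 < c := by positivity
  simp only [X, Fintype.card_piFinset]
  rw [Real.rpow_natCast]
  push_cast
  have key : ∀ i : Fin m, (if i.val < r then (c * H ^ 2) ^ n else 1) ≤ ∏ j, ((S i j).card : ℝ) := by
    intro i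
    split_ifs with hi
    · have : (c * H ^ 2) ^ n = ∏ j : Fin n, (c * H ^ 2) := by simp
      rw [this]
      apply Finset.prod_le_prod
      · intro j _; positivity
      · intro j _
        simp only [S, if_pos hi]
        split_ifs
        · exact hDc
        · exact hTc
    · simp [S, hi]
  refine le_trans ?_ (Finset.prod_le_prod (fun i _ => ?_) fun i _ => key i)
  · rw [Finset.prod_ite, Finset.prod_const, Finset.prod_const_one, mul_one]
    have : (Finset.univ.filter fun i : Fin m => i.val < r).card = r := by
      rw [Fin.card_filter_val_lt]; omega
    rw [this, ← pow_mul, mul_pow, ← pow_mul, ← mul_assoc]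
  · split_ifs <;> positivity
end

section
/- For every ε > 0 there exists a constant C = C(ε) such that for all real H ≥ 2 and all δ ∈ ℚ, the number of 2×2 matrices with all entries in F(H) and with determinant equal to δ is at most C·H^{4+ε}. -/
open Finset in
lemma divisor_bound (ε : ℝ) (hε : 0 < ε) : ∃ C : ℝ, 1 ≤ C ∧ ∀ n : ℕ, n ≠ 0 →
    (n.divisors.card : ℝ) ≤ C * (n : ℝ) ^ ε := by
  have hl : 0 < Real.log 2 := Real.log_pos (by norm_num)
  set A : ℝ := 1 + 1 / (ε * Real.log 2) with hA
  have hA1 : 1 ≤ A := by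
    have : 0 < 1 / (ε * Real.log 2) := by positivity
    linarith
  set P : ℕ := ⌈(2:ℝ) ^ (1/ε)⌉₊ with hP
  refine ⟨A ^ P, one_le_pow₀ hA1, ?_⟩
  intro n hn
  have key : ∀ p ∈ n.primeFactors, ((n.factorization p + 1 : ℕ) : ℝ) ≤
      (if p < P then A else 1) * ((p : ℝ) ^ (n.factorization p)) ^ ε := by
    intro p hp
    have hp2 : 2 ≤ p := (Nat.prime_of_mem_primeFactors hp).two_le
    have hp2' : (2:ℝ) ≤ p := by exact_mod_cast hp2
    set k := n.factorization p
    have e1 : ((p : ℝ) ^ k) ^ ε = ((p:ℝ) ^ ε) ^ k := by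
      rw [← Real.rpow_natCast, ← Real.rpow_natCast, ← Real.rpow_mul (by positivity),
        ← Real.rpow_mul (by positivity), mul_comm]
    rw [e1]
    split_ifs with h
    · have h2 : (2:ℝ) ^ ε ≤ (p:ℝ) ^ ε := Real.rpow_le_rpow (by norm_num) hp2' hε.le
      have h3 : ((2:ℝ) ^ ε) ^ k ≤ ((p:ℝ) ^ ε) ^ k := pow_le_pow_left₀ (by positivity) h2 k
      have h4 : 1 + k * (ε * Real.log 2) ≤ ((2:ℝ) ^ ε) ^ k := by
        rw [Real.rpow_def_of_pos (by norm_num), ← Real.exp_nat_mul]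
        have := Real.add_one_le_exp (k * (Real.log 2 * ε))
        nlinarith
      have h5 : ((k + 1 : ℕ) : ℝ) ≤ A * (1 + k * (ε * Real.log 2)) := by
        have hx : 0 < ε * Real.log 2 := by positivity
        have : A * (1 + k * (ε * Real.log 2)) = 1 + k + k * (ε * Real.log 2) + 1 / (ε * Real.log 2) := by
          rw [hA]; field_simp; ring
        rw [this]; push_cast
        have : 0 < 1 / (ε * Real.log 2) := by positivity
        have : 0 ≤ k * (ε * Real.log 2) := by positivity
        linarith
      exact h5.trans (mul_le_mul_of_nonneg_left (h4.trans h3) (by linarith))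
    · rw [one_mul]
      have h1 : (2:ℝ) ^ (1/ε) ≤ p := (Nat.le_ceil _).trans (by exact_mod_cast not_lt.mp h)
      have h2 : (2:ℝ) ≤ (p:ℝ) ^ ε := by
        have := Real.rpow_le_rpow (by positivity) h1 hε.le
        rwa [← Real.rpow_mul (by norm_num), one_div_mul_cancel hε.ne', Real.rpow_one] at this
      have h3 : (2:ℝ) ^ k ≤ ((p:ℝ) ^ ε) ^ k := pow_le_pow_left₀ (by norm_num) h2 k
      refine le_trans ?_ h3
      exact_mod_cast (Nat.lt_two_pow_self (n := k))
  have e2 : (n : ℝ) ^ ε = ∏ p ∈ n.primeFactors, ((p : ℝ) ^ (n.factorization p)) ^ ε := by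
    rw [Real.finsetProd_rpow _ _ (fun i _ => by positivity)]
    congr 1
    conv_lhs => rw [← Nat.prod_factorization_pow_eq_self hn]
    rw [Finsupp.prod, Nat.support_factorization]; push_cast; rfl
  rw [Nat.card_divisors hn, e2]
  push_cast
  have h1 := Finset.prod_le_prod (s := n.primeFactors) (fun i _ => by positivity) key
  rw [Finset.prod_mul_distrib] at h1
  push_cast at h1
  refine h1.trans (mul_le_mul_of_nonneg_right ?_ (by positivity))
  rw [← Finset.prod_filter, Finset.prod_const]
  apply pow_le_pow_right₀ hA1
  calc _ ≤ (range P).card := card_le_card (by intro x; simp)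
    _ = P := by simp

open Finset in
lemma card_residue (X : ℕ) (r : ℕ) (hr : 0 < r) (S : Finset ℤ) (hS : S ⊆ Icc (-(X:ℤ)) X)
    (h : ∀ a ∈ S, ∀ b ∈ S, (r:ℤ) ∣ a - b) : S.card ≤ 2 * X / r + 1 := by
  have hr' : (0:ℤ) < r := by exact_mod_cast hr
  have := Finset.card_le_card_of_injOn (s := S) (t := range (2 * X / r + 1))
    (fun a => ((a + X) / r).toNat) ?_ ?_
  · simpa using this
  · intro a ha
    have := mem_Icc.mp (hS ha)
    have h0 : 0 ≤ (a + X) / (r:ℤ) := Int.ediv_nonneg (by linarith) hr'.le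
    have h1 : (a + X) / (r:ℤ) ≤ (2 * X) / r := Int.ediv_le_ediv hr' (by linarith)
    have h2 : ((2 * X / r : ℕ) : ℤ) = (2 * X) / r := by push_cast; rfl
    simp only [coe_range, Set.mem_Iio]
    omega
  · intro a ha b hb hab
    have ha' := mem_Icc.mp (hS ha)
    have hb' := mem_Icc.mp (hS hb)
    have h0 : 0 ≤ (a + X) / (r:ℤ) := Int.ediv_nonneg (by linarith) hr'.le
    have h1 : 0 ≤ (b + X) / (r:ℤ) := Int.ediv_nonneg (by linarith) hr'.le
    have e : (a + X) / (r:ℤ) = (b + X) / r := by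
      simp only at hab; omega
    have hm : (a + X) % (r:ℤ) = (b + X) % r := by
      apply Int.emod_emod_of_dvd _ (dvd_refl _) |>.symm.trans
      rw [Int.emod_emod_of_dvd _ (dvd_refl _)]
      apply Int.emod_eq_emod_iff_emod_sub_eq_zero.mpr
      apply Int.emod_eq_zero_of_dvd
      have := h a ha b hb
      rwa [show a + X - (b + X) = a - b by ring]
    have h3 := Int.mul_ediv_add_emod (a + X) r
    have h4 := Int.mul_ediv_add_emod (b + X) r
    rw [e, hm] at h3
    linarith

open Finset in
noncomputable def solset (X : ℕ) (δ : ℚ) (p : ℕ × ℕ) : Finset (ℤ × ℤ) :=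
  (Icc (-(X:ℤ)) X ×ˢ Icc (-(X:ℤ)) X).filter
    (fun q => q.1 ≠ 0 ∧ q.2 ≠ 0 ∧ (q.1:ℚ) * p.2 - q.2 * p.1 = δ * p.1 * p.2)

open Finset in
lemma card_solset (X : ℕ) (δ : ℚ) (M N : ℕ) (hM : 0 < M) (hN : 0 < N) :
    ((solset X δ (M, N)).card : ℝ) ≤ 1 + 2 * X * (M.gcd N) / M := by
  have hg : 0 < M.gcd N := Nat.gcd_pos_of_pos_left _ hM
  obtain ⟨r, hr⟩ := Nat.gcd_dvd_left M N
  obtain ⟨s, hs⟩ := Nat.gcd_dvd_right M N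
  have hr0 : 0 < r := by
    rcases Nat.eq_zero_or_pos r with h | h
    · rw [h] at hr; omega
    · exact h
  have hMQ : (M:ℚ) ≠ 0 := by exact_mod_cast hM.ne'
  have hinj : Set.InjOn (Prod.fst : ℤ × ℤ → ℤ) (solset X δ (M, N)) := by
    rintro ⟨a, b⟩ h1 ⟨c, d⟩ h2 (rfl : a = c)
    simp only [solset, coe_filter, Set.mem_ofPred_eq] at h1 h2
    have : ((b:ℚ) - d) * M = 0 := by linarith [h1.2.2.2, h2.2.2.2]
    have h3 : (b:ℚ) = d := by
      rcases mul_eq_zero.mp this with h | h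
      · linarith
      · exact absurd h hMQ
    have h4 : b = d := by exact_mod_cast h3
    rw [h4]
  have hc := card_residue X r hr0 ((solset X δ (M, N)).image Prod.fst) ?_ ?_
  · rw [Finset.card_image_of_injOn hinj] at hc
    have h1 : ((solset X δ (M, N)).card : ℝ) ≤ ((2 * X / r : ℕ) : ℝ) + 1 := by exact_mod_cast hc
    have h2 : ((2 * X / r : ℕ) : ℝ) ≤ ((2 * X : ℕ):ℝ) / r := Nat.cast_div_le
    have h3 : ((2 * X : ℕ):ℝ) / r = 2 * X * (M.gcd N) / M := by
      have : (M:ℝ) = M.gcd N * r := by exact_mod_cast hr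
      have hg' : (M.gcd N : ℝ) ≠ 0 := by exact_mod_cast hg.ne'
      have hr' : (r : ℝ) ≠ 0 := by exact_mod_cast hr0.ne'
      rw [div_eq_div_iff hr' (by exact_mod_cast hM.ne'), this]
      push_cast; ring
    linarith
  · intro x hx
    obtain ⟨y, hy, rfl⟩ := mem_image.mp hx
    simp only [solset, mem_filter, mem_product] at hy
    exact hy.1.1
  · intro x hx x' hx'
    obtain ⟨⟨a, b⟩, hy, rfl⟩ := mem_image.mp hx
    obtain ⟨⟨c, d⟩, hy', rfl⟩ := mem_image.mp hx'
    simp only [solset, mem_filter] at hy hy'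
    have e : ((a:ℚ) - c) * N = (b - d) * M := by linarith [hy.2.2.2, hy'.2.2.2]
    have e' : (a - c) * (N:ℤ) = (b - d) * M := by exact_mod_cast e
    have cop : Nat.Coprime r s := by
      have := Nat.gcd_mul_left (M.gcd N) r s
      rw [← hr, ← hs] at this
      exact Nat.eq_of_mul_eq_mul_left hg (by rw [← this, mul_one])
    have e2 : (a - c) * (s:ℤ) = (b - d) * r := by
      have hgz : (M.gcd N : ℤ) ≠ 0 := by exact_mod_cast hg.ne'
      have hrz : (M:ℤ) = M.gcd N * r := by exact_mod_cast hr
      have hsz : (N:ℤ) = M.gcd N * s := by exact_mod_cast hs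
      apply mul_left_cancel₀ hgz
      calc _ = (a - c) * ((M.gcd N : ℤ) * s) := by ring
        _ = (b - d) * ((M.gcd N : ℤ) * r) := by rw [← hsz, ← hrz, e']
        _ = _ := by ring
    have : (r:ℤ) ∣ (a - c) * s := ⟨b - d, by rw [e2]; ring⟩
    exact IsCoprime.dvd_of_dvd_mul_right (Nat.isCoprime_iff_coprime.mpr cop) this

open Finset in
lemma sum_gcd (X M : ℕ) (hM : 0 < M) :
    ∑ N ∈ Icc 1 X, M.gcd N ≤ X * M.divisors.card := by
  calc ∑ N ∈ Icc 1 X, M.gcd N ≤ ∑ N ∈ Icc 1 X, ∑ d ∈ M.divisors, if d ∣ N then d else 0 := by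
        apply sum_le_sum
        intro N hN
        have hmem : M.gcd N ∈ M.divisors := Nat.mem_divisors.mpr ⟨Nat.gcd_dvd_left _ _, hM.ne'⟩
        have := Finset.single_le_sum (f := fun d => if d ∣ N then d else 0)
          (fun _ _ => Nat.zero_le _) hmem
        simpa [Nat.gcd_dvd_right] using this
    _ = ∑ d ∈ M.divisors, ∑ N ∈ Icc 1 X, if d ∣ N then d else 0 := sum_comm
    _ ≤ ∑ d ∈ M.divisors, X := by
        apply sum_le_sum
        intro d hd
        rw [← sum_filter, sum_const, smul_eq_mul]
        have : #{a ∈ Icc 1 X | d ∣ a} = X / d := by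
          have := Nat.Ioc_filter_dvd_card_eq_div X d
          rw [← this]; congr 1
        rw [this]
        exact Nat.div_mul_le_self X d
    _ = _ := by rw [sum_const, smul_eq_mul, mul_comm]

open Finset in
lemma card_T (X : ℕ) (hX : 1 ≤ X) (δ : ℚ) (D : ℝ)
    (hD : ∀ n : ℕ, n ≠ 0 → n ≤ X → (n.divisors.card : ℝ) ≤ D) :
    (((Icc 1 X ×ˢ Icc 1 X).sigma (solset X δ)).card : ℝ) ≤
      X ^ 2 * (1 + 2 * D * (1 + Real.log X)) := by
  have hD0 : 0 ≤ D := le_trans (by positivity) (hD 1 one_ne_zero hX)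
  rw [card_sigma, sum_product]
  push_cast
  calc ∑ M ∈ Icc 1 X, ∑ N ∈ Icc 1 X, ((solset X δ (M, N)).card : ℝ)
      ≤ ∑ M ∈ Icc 1 X, (X + 2 * X ^ 2 * D * ((M:ℝ)⁻¹)) := by
        apply sum_le_sum
        intro M hM
        have hM1 := mem_Icc.mp hM
        have hMpos : (0:ℝ) < M := by exact_mod_cast hM1.1
        calc ∑ N ∈ Icc 1 X, ((solset X δ (M, N)).card : ℝ)
            ≤ ∑ N ∈ Icc 1 X, (1 + 2 * X / M * (M.gcd N : ℝ)) := by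
              apply sum_le_sum
              intro N hN
              refine (card_solset X δ M N hM1.1 (mem_Icc.mp hN).1).trans (le_of_eq ?_)
              ring
          _ = X + 2 * X / M * ((∑ N ∈ Icc 1 X, M.gcd N : ℕ) : ℝ) := by
              rw [sum_add_distrib, ← mul_sum]; simp
          _ ≤ X + 2 * X / M * (X * D) := by
              gcongr
              have h := sum_gcd X M hM1.1
              have h' : ((∑ N ∈ Icc 1 X, M.gcd N : ℕ) : ℝ) ≤ X * M.divisors.card := by
                exact_mod_cast h
              refine h'.trans ?_
              gcongr
              exact hD M (by omega) hM1.2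
          _ = _ := by field_simp
    _ = X ^ 2 + 2 * X ^ 2 * D * ∑ M ∈ Icc 1 X, ((M:ℝ)⁻¹) := by
        rw [sum_add_distrib, ← mul_sum]; simp; ring
    _ ≤ X ^ 2 + 2 * X ^ 2 * D * (1 + Real.log X) := by
        gcongr
        have := harmonic_le_one_add_log X
        rw [harmonic_eq_sum_Icc] at this
        push_cast at this
        exact this
    _ = _ := by ring

open Finset in
noncomputable def FF (K : ℕ) : Finset ℚ :=
  ((Icc (-(K:ℤ)) K ×ˢ Icc 1 K).image (fun p : ℤ × ℕ => (p.1 : ℚ) / p.2)).filter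
    (fun x => |x.num| ≤ K ∧ x.den ≤ K)

open Finset in
lemma mem_FF (K : ℕ) (x : ℚ) : x ∈ FF K ↔ |x.num| ≤ K ∧ x.den ≤ K := by
  unfold FF
  rw [mem_filter]
  refine ⟨fun h => h.2, fun h => ⟨?_, h⟩⟩
  rw [mem_image]
  refine ⟨(x.num, x.den), ?_, Rat.num_div_den x⟩
  simp only [mem_product, mem_Icc]
  exact ⟨abs_le.mp h.1, x.den_pos, h.2⟩

open Finset in
lemma card_FF (K : ℕ) (hK : 1 ≤ K) : (FF K).card ≤ 3 * K ^ 2 := by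
  unfold FF
  refine (card_filter_le _ _).trans (card_image_le.trans ?_)
  rw [card_product]
  simp only [Int.card_Icc, Nat.card_Icc]
  have : ((K:ℤ) + 1 - -(K:ℤ)).toNat = 2 * K + 1 := by omega
  rw [this, Nat.add_sub_cancel]
  nlinarith

open Finset in
lemma card_prod_eq (F : Finset ℚ) (c : ℚ) :
    ((F ×ˢ F).filter (fun p : ℚ × ℚ => p.1 * p.2 = c)).card ≤ 2 * F.card := by
  have hsub : (F ×ˢ F).filter (fun p : ℚ × ℚ => p.1 * p.2 = c) ⊆
      F.image (fun x => (x, c / x)) ∪ F.image (fun y => ((0:ℚ), y)) := by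
    rintro ⟨x, y⟩ h
    simp only [mem_filter, mem_product] at h
    obtain ⟨⟨hx, hy⟩, h⟩ := h
    rw [mem_union, mem_image, mem_image]
    by_cases h0 : x = 0
    · right; exact ⟨y, hy, by rw [h0]⟩
    · left; refine ⟨x, hx, ?_⟩
      rw [← h, mul_div_cancel_left₀ _ h0]
  refine (card_le_card hsub).trans ((card_union_le _ _).trans ?_)
  have h1 : (F.image (fun x => (x, c / x))).card ≤ F.card := card_image_le
  have h2 : (F.image (fun y => ((0:ℚ), y))).card ≤ F.card := card_image_le
  omega

open Finset in
noncomputable def QQ (F : Finset ℚ) (δ : ℚ) : Finset (ℚ × ℚ × ℚ × ℚ) :=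
  (F ×ˢ F ×ˢ F ×ˢ F).filter (fun t => t.1 * t.2.2.2 - t.2.1 * t.2.2.1 = δ)

open Finset in
lemma card_bad (F : Finset ℚ) (δ : ℚ) :
    ((QQ F δ).filter (fun t => t.1 = 0 ∨ t.2.1 = 0 ∨ t.2.2.1 = 0 ∨ t.2.2.2 = 0)).card
      ≤ 8 * F.card ^ 2 := by
  set R : ℚ → Finset (ℚ × ℚ × ℚ) := fun c =>
    F ×ˢ ((F ×ˢ F).filter (fun p : ℚ × ℚ => p.1 * p.2 = c)) with hR
  have hRc : ∀ c, (R c).card ≤ 2 * F.card ^ 2 := by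
    intro c
    rw [hR]; simp only [card_product]
    have := card_prod_eq F c
    nlinarith
  have hsub : (QQ F δ).filter (fun t => t.1 = 0 ∨ t.2.1 = 0 ∨ t.2.2.1 = 0 ∨ t.2.2.2 = 0) ⊆
      ((R (-δ)).image (fun t => ((0:ℚ), t.2.1, t.2.2, t.1)) ∪
       (R (-δ)).image (fun t => (t.1, t.2.1, t.2.2, (0:ℚ)))) ∪
      ((R δ).image (fun t => (t.2.1, (0:ℚ), t.1, t.2.2)) ∪
       (R δ).image (fun t => (t.2.1, t.1, (0:ℚ), t.2.2))) := by
    rintro ⟨a, b, c, d⟩ h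
    simp only [QQ, mem_filter, mem_product] at h
    obtain ⟨⟨⟨ha, hb, hc, hd⟩, he⟩, h⟩ := h
    simp only [mem_union, mem_image, hR, mem_product, mem_filter]
    rcases h with h | h | h | h
    · left; left
      exact ⟨(d, b, c), ⟨hd, ⟨hb, hc⟩, by simp only; rw [← he, h]; ring⟩, by rw [h]⟩
    · right; left
      exact ⟨(c, a, d), ⟨hc, ⟨ha, hd⟩, by simp only; rw [← he, h]; ring⟩, by rw [h]⟩
    · right; right
      exact ⟨(b, a, d), ⟨hb, ⟨ha, hd⟩, by simp only; rw [← he, h]; ring⟩, by rw [h]⟩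
    · left; right
      exact ⟨(a, b, c), ⟨ha, ⟨hb, hc⟩, by simp only; rw [← he, h]; ring⟩, by rw [h]⟩
  refine (card_le_card hsub).trans ((card_union_le _ _).trans ?_)
  have h1 := card_union_le ((R (-δ)).image (fun t => ((0:ℚ), t.2.1, t.2.2, t.1)))
       ((R (-δ)).image (fun t => (t.1, t.2.1, t.2.2, (0:ℚ))))
  have h2 := card_union_le ((R δ).image (fun t => (t.2.1, (0:ℚ), t.1, t.2.2)))
       ((R δ).image (fun t => (t.2.1, t.1, (0:ℚ), t.2.2)))
  have i1 : ((R (-δ)).image (fun t => ((0:ℚ), t.2.1, t.2.2, t.1))).card ≤ _ := card_image_le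
  have i2 : ((R (-δ)).image (fun t => (t.1, t.2.1, t.2.2, (0:ℚ)))).card ≤ _ := card_image_le
  have i3 : ((R δ).image (fun t => (t.2.1, (0:ℚ), t.1, t.2.2))).card ≤ _ := card_image_le
  have i4 : ((R δ).image (fun t => (t.2.1, t.1, (0:ℚ), t.2.2))).card ≤ _ := card_image_le
  have j1 := hRc δ
  have j2 := hRc (-δ)
  omega

open Finset in
def sdiv (m : ℤ) : Finset ℤ :=
  m.natAbs.divisors.image (fun d : ℕ => (d:ℤ)) ∪ m.natAbs.divisors.image (fun d : ℕ => -(d:ℤ))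

open Finset in
lemma card_sdiv (m : ℤ) : (sdiv m).card ≤ 2 * m.natAbs.divisors.card := by
  refine (card_union_le _ _).trans ?_
  have i1 : (m.natAbs.divisors.image (fun d : ℕ => (d:ℤ))).card ≤ _ := card_image_le
  have i2 : (m.natAbs.divisors.image (fun d : ℕ => -(d:ℤ))).card ≤ _ := card_image_le
  omega

open Finset in
lemma mem_sdiv (m a : ℤ) (hm : m ≠ 0) (h : a ∣ m) : a ∈ sdiv m := by
  have : a.natAbs ∈ m.natAbs.divisors :=
    Nat.mem_divisors.mpr ⟨Int.natAbs_dvd_natAbs.mpr h, Int.natAbs_ne_zero.mpr hm⟩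
  simp only [sdiv, mem_union, mem_image]
  rcases Int.natAbs_eq a with h | h
  · left; exact ⟨_, this, h.symm⟩
  · right; exact ⟨_, this, h.symm⟩

open Finset in
lemma card_good (K : ℕ) (δ : ℚ) (D : ℕ)
    (hD : ∀ n : ℕ, n ≠ 0 → n ≤ K ^ 2 → n.divisors.card ≤ D) :
    ((QQ (FF K) δ).filter
      (fun t => ¬ (t.1 = 0 ∨ t.2.1 = 0 ∨ t.2.2.1 = 0 ∨ t.2.2.2 = 0))).card ≤
      (4 * D ^ 4) * (((Icc 1 (K ^ 2) ×ˢ Icc 1 (K ^ 2)).sigma (solset (K ^ 2) δ)).card) := by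
  apply card_le_mul_card_image_of_maps_to
    (f := fun t => (⟨(t.1.den * t.2.2.2.den, t.2.1.den * t.2.2.1.den),
      (t.1.num * t.2.2.2.num, t.2.1.num * t.2.2.1.num)⟩ : (_ : ℕ × ℕ) × (ℤ × ℤ)))
  · rintro ⟨a, b, c, d⟩ h
    simp only [QQ, mem_filter, mem_product, mem_FF, not_or] at h
    obtain ⟨⟨⟨ha, hb, hc, hd⟩, he⟩, a0, b0, c0, d0⟩ := h
    have mulb : ∀ x y : ℤ, |x| ≤ K → |y| ≤ K → -((K^2:ℕ):ℤ) ≤ x * y ∧ x * y ≤ ((K^2:ℕ):ℤ) := by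
      intro x y hx hy
      apply abs_le.mp
      rw [abs_mul]; push_cast
      nlinarith [abs_nonneg x, abs_nonneg y]
    have muln : ∀ x y : ℕ, x ≤ K → y ≤ K → x * y ≤ K ^ 2 := by
      intro x y hx hy; rw [sq]; exact Nat.mul_le_mul hx hy
    simp only [mem_sigma, mem_product, mem_Icc, solset, mem_filter]
    refine ⟨⟨⟨Nat.mul_pos a.den_pos d.den_pos, muln _ _ ha.2 hd.2⟩,
      ⟨Nat.mul_pos b.den_pos c.den_pos, muln _ _ hb.2 hc.2⟩⟩,
      ⟨mulb _ _ ha.1 hd.1, mulb _ _ hb.1 hc.1⟩, ?_, ?_, ?_⟩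
    · exact mul_ne_zero (Rat.num_ne_zero.mpr a0) (Rat.num_ne_zero.mpr d0)
    · exact mul_ne_zero (Rat.num_ne_zero.mpr b0) (Rat.num_ne_zero.mpr c0)
    · have na : (a.num : ℚ) = a * a.den := (Rat.mul_den_eq_num a).symm
      have nb : (b.num : ℚ) = b * b.den := (Rat.mul_den_eq_num b).symm
      have nc : (c.num : ℚ) = c * c.den := (Rat.mul_den_eq_num c).symm
      have nd : (d.num : ℚ) = d * d.den := (Rat.mul_den_eq_num d).symm
      push_cast
      rw [na, nb, nc, nd, ← he]
      ring
  · rintro ⟨⟨M, N⟩, ⟨m, n⟩⟩ ht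
    simp only [mem_sigma, mem_product, mem_Icc, solset, mem_filter] at ht
    obtain ⟨⟨hM, hN⟩, ⟨hm, hn⟩, m0, n0, -⟩ := ht
    have hinj := card_le_card_of_injOn (s := ((QQ (FF K) δ).filter
      (fun t => ¬ (t.1 = 0 ∨ t.2.1 = 0 ∨ t.2.2.1 = 0 ∨ t.2.2.2 = 0))).filter
        (fun t => (⟨(t.1.den * t.2.2.2.den, t.2.1.den * t.2.2.1.den),
      (t.1.num * t.2.2.2.num, t.2.1.num * t.2.2.1.num)⟩ : (_ : ℕ × ℕ) × (ℤ × ℤ)) =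
        ⟨(M, N), (m, n)⟩))
      (t := (M.divisors ×ˢ N.divisors) ×ˢ (sdiv m ×ˢ sdiv n))
      (fun t => ((t.1.den, t.2.1.den), (t.1.num, t.2.1.num))) ?_ ?_
    · refine hinj.trans ?_
      simp only [card_product]
      have h1 := hD M (by omega) hM.2
      have h2 := hD N (by omega) hN.2
      have h3 := hD m.natAbs (Int.natAbs_ne_zero.mpr m0) (by omega)
      have h4 := hD n.natAbs (Int.natAbs_ne_zero.mpr n0) (by omega)
      have h3' : (sdiv m).card ≤ 2 * D := (card_sdiv m).trans (by omega)
      have h4' : (sdiv n).card ≤ 2 * D := (card_sdiv n).trans (by omega)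
      calc _ ≤ (D * D) * ((2 * D) * (2 * D)) := by gcongr
        _ = _ := by ring
    · rintro ⟨a, b, c, d⟩ h
      simp only [coe_filter, Set.mem_ofPred_eq, Sigma.mk.injEq, Prod.mk.injEq, heq_eq_eq] at h
      obtain ⟨-, ⟨h1, h2⟩, h3, h4⟩ := h
      simp only [coe_product, Set.mem_prod, mem_coe]
      refine ⟨⟨Nat.mem_divisors.mpr ⟨⟨_, h1.symm⟩, by omega⟩,
        Nat.mem_divisors.mpr ⟨⟨_, h2.symm⟩, by omega⟩⟩,
        mem_sdiv _ _ m0 ⟨_, h3.symm⟩, mem_sdiv _ _ n0 ⟨_, h4.symm⟩⟩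
    · rintro ⟨a, b, c, d⟩ h ⟨a', b', c', d'⟩ h' e
      simp only [coe_filter, mem_filter, Set.mem_ofPred_eq, Sigma.mk.injEq, Prod.mk.injEq,
        heq_eq_eq, not_or] at h h' e
      obtain ⟨⟨-, a0, b0, -⟩, ⟨h1, h2⟩, h3, h4⟩ := h
      obtain ⟨-, ⟨h1', h2'⟩, h3', h4'⟩ := h'
      obtain ⟨⟨e1, e2⟩, e3, e4⟩ := e
      have ea : a = a' := Rat.ext e3 e1
      have eb : b = b' := Rat.ext e4 e2
      subst ea eb
      have ed : d = d' := Rat.ext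
        (mul_left_cancel₀ (Rat.num_ne_zero.mpr a0) (h3.trans h3'.symm))
        (Nat.eq_of_mul_eq_mul_left a.den_pos (h1.trans h1'.symm))
      have ec : c = c' := Rat.ext
        (mul_left_cancel₀ (Rat.num_ne_zero.mpr b0) (h4.trans h4'.symm))
        (Nat.eq_of_mul_eq_mul_left b.den_pos (h2.trans h2'.symm))
      rw [ec, ed]

open Finset in
lemma main_count (K : ℕ) (hK : 1 ≤ K) (δ : ℚ) (D : ℕ)
    (hD : ∀ n : ℕ, n ≠ 0 → n ≤ K ^ 2 → n.divisors.card ≤ D) :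
    ((QQ (FF K) δ).card : ℝ) ≤ 72 * (K:ℝ) ^ 4 +
      4 * (D:ℝ) ^ 4 * ((K:ℝ) ^ 4 * (1 + 2 * D * (1 + Real.log ((K:ℝ) ^ 2)))) := by
  have h1 := card_bad (FF K) δ
  have h2 := card_good K δ D hD
  have h3 := card_FF K hK
  have h4 := card_T (K ^ 2) (Nat.one_le_pow _ _ hK) δ D
    (fun n a b => by exact_mod_cast hD n a b)
  have h5 := Finset.card_filter_add_card_filter_not (s := QQ (FF K) δ)
    (fun t => t.1 = 0 ∨ t.2.1 = 0 ∨ t.2.2.1 = 0 ∨ t.2.2.2 = 0)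
  have h6 : 8 * (FF K).card ^ 2 ≤ 72 * K ^ 4 := by
    calc _ ≤ 8 * (3 * K ^ 2) ^ 2 := by gcongr
      _ = _ := by ring
  rw [← h5]
  push_cast at h4 ⊢
  rw [show ((K:ℝ) ^ 2) ^ 2 = (K:ℝ) ^ 4 by ring] at h4
  apply add_le_add
  · exact_mod_cast h1.trans h6
  · refine le_trans (Nat.cast_le.mpr h2) ?_
    push_cast
    gcongr

theorem stmt2 :
    ∀ ε > (0 : ℝ), ∃ C : ℝ, ∀ H : ℝ, H ≥ 2 → ∀ δ : ℚ,
      (Set.ncard {A : Matrix (Fin 2) (Fin 2) ℚ |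
          (∀ i j, A i j ∈ Farey H) ∧ A.det = δ} : ℝ) ≤
        C * H ^ ((4 : ℝ) + ε) := by
  intro ε hε
  obtain ⟨C, hC1, hC⟩ := divisor_bound (ε / 12) (by positivity)
  set B : ℝ := 1 + 12 / ε with hB
  have hB1 : 1 ≤ B := by have : 0 < 12 / ε := by positivity
                         linarith
  refine ⟨72 + 4 * C ^ 4 * (1 + 2 * C * B), ?_⟩
  intro H hH δ
  set K : ℕ := ⌊H⌋₊ with hKdef
  have hK : 1 ≤ K := Nat.le_floor (by norm_num; linarith)
  have hKH : (K:ℝ) ≤ H := Nat.floor_le (by linarith)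
  have hK1 : (1:ℝ) ≤ K := by exact_mod_cast hK
  -- the power `E = K^(ε/6)`
  set E : ℝ := ((K:ℝ) ^ 2) ^ (ε / 12) with hE
  have hE1 : 1 ≤ E := Real.one_le_rpow (one_le_pow₀ hK1) (by positivity)
  set D : ℕ := ⌊C * E⌋₊ with hDdef
  have hDle : (D:ℝ) ≤ C * E := Nat.floor_le (by positivity)
  have hD : ∀ n : ℕ, n ≠ 0 → n ≤ K ^ 2 → n.divisors.card ≤ D := by
    intro n hn hnK
    apply Nat.le_floor
    refine (hC n hn).trans ?_
    have : (n:ℝ) ≤ (K:ℝ) ^ 2 := by exact_mod_cast hnK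
    gcongr
    exact Real.rpow_le_rpow (by positivity) this (by positivity)
  have hcount := main_count K hK δ D hD
  have hlog : 1 + Real.log ((K:ℝ) ^ 2) ≤ B * E := by
    have := Real.log_le_rpow_div (x := (K:ℝ) ^ 2) (by positivity) (show 0 < ε / 12 by positivity)
    rw [← hE] at this
    have e : B * E = E + E / (ε / 12) := by rw [hB]; field_simp
    rw [e]; linarith
  have hlog0 : 0 ≤ Real.log ((K:ℝ) ^ 2) := Real.log_nonneg (one_le_pow₀ hK1)
  have hcard : Set.ncard {A : Matrix (Fin 2) (Fin 2) ℚ |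
          (∀ i j, A i j ∈ Farey H) ∧ A.det = δ} ≤ (QQ (FF K) δ).card := by
    rw [← Set.ncard_coe_finset]
    refine Set.ncard_le_ncard_of_injOn (fun A => (A 0 0, A 0 1, A 1 0, A 1 1)) ?_ ?_
      (Finset.finite_toSet _)
    · rintro A ⟨h1, h2⟩
      rw [Matrix.det_fin_two] at h2
      have hm : ∀ i j, A i j ∈ FF K := by
        intro i j
        obtain ⟨h3, h4⟩ := h1 i j
        rw [mem_FF]
        refine ⟨?_, Nat.le_floor h4⟩
        have : (A i j).num.natAbs ≤ K := by
          apply Nat.le_floor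
          rw [Nat.cast_natAbs]; push_cast; exact h3
        rw [Int.abs_eq_natAbs]; exact_mod_cast this
      simp only [QQ, Finset.coe_filter, Finset.mem_product]
      exact ⟨⟨hm _ _, hm _ _, hm _ _, hm _ _⟩, h2⟩
    · rintro A - A' - h
      simp only [Prod.mk.injEq] at h
      ext i j
      fin_cases i <;> fin_cases j
      exacts [h.1, h.2.1, h.2.2.1, h.2.2.2]
  have hcard' : (Set.ncard {A : Matrix (Fin 2) (Fin 2) ℚ |
          (∀ i j, A i j ∈ Farey H) ∧ A.det = δ} : ℝ) ≤ ((QQ (FF K) δ).card : ℝ) := by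
    exact_mod_cast hcard
  refine hcard'.trans (hcount.trans ?_)
  have hE6 : (K:ℝ) ^ 4 * E ^ 6 = (K:ℝ) ^ ((4:ℝ) + ε) := by
    rw [Real.rpow_add (by linarith), hE, ← Real.rpow_natCast (_ ^ (ε / 12)),
      ← Real.rpow_mul (by positivity), ← Real.rpow_natCast (K:ℝ) 2, ← Real.rpow_mul (by positivity),
      ← Real.rpow_natCast (K:ℝ) 4]
    congr 2
    push_cast; ring
  have hE6' : 1 ≤ E ^ 6 := one_le_pow₀ hE1
  have hE2' : 1 ≤ E ^ 2 := one_le_pow₀ hE1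
  have hC0 : 0 ≤ C := by linarith
  have hB0 : 0 ≤ B := by linarith
  have hE0 : 0 ≤ E := by linarith
  calc 72 * (K:ℝ) ^ 4 +
      4 * (D:ℝ) ^ 4 * ((K:ℝ) ^ 4 * (1 + 2 * D * (1 + Real.log ((K:ℝ) ^ 2))))
      ≤ 72 * ((K:ℝ) ^ 4 * E ^ 6) +
      4 * (C * E) ^ 4 * ((K:ℝ) ^ 4 * (E ^ 2 + 2 * (C * E) * (B * E))) := by
        apply add_le_add
        · have : (K:ℝ) ^ 4 * 1 ≤ (K:ℝ) ^ 4 * E ^ 6 := by gcongr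
          linarith
        · gcongr
    _ = (72 + 4 * C ^ 4 * (1 + 2 * C * B)) * ((K:ℝ) ^ 4 * E ^ 6) := by ring
    _ = (72 + 4 * C ^ 4 * (1 + 2 * C * B)) * (K:ℝ) ^ ((4:ℝ) + ε) := by rw [hE6]
    _ ≤ _ := by gcongr
end
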